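/- For ν > −1 define the generalized Laguerre polynomials L_n^ν(x) := Σ_{k=0}^{n} (−1)^k · (Γ(n+ν+1)/(Γ(k+ν+1)·(n−k)!·k!)) · x^k, where Γ is the Gamma function. For an integer dimension d ≥ 1, set ν = d/2 − 1 and define the radial Laguerre functions Φ_n(r) := L_n^{d/2−1}(2πr²)·e^{−πr²} for r > 0. Let r₁, r₂ > 0 be radii with q·r₁ = p·r₂ for coprime positive integers p, q. Then L := lim_{N→∞} (1/N)·#{0 ≤ n < N : sgn(Φ_n(r₁)) = sgn(Φ_n(r₂))} exists, and: L = 1/2 if p or q is even, or if p and q are odd and (p−q)(d−1)/2 is odd; otherwise (i.e., p, q both odd and (p−q)(d−1)/2 even, so that (p−q)(d−1)/4 is an integer), L = 1/2 − (1/(2pq))·(−1)^{(p+q)/2 + (p−q)(d−1)/4}. -/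

import Mathlib

open Filter Real MeasureTheory
open scoped Classical

noncomputable def sgn (t : ℝ) : ℝ := if 0 < t then 1 else if t < 0 then -1 else 0

/-- Generalized Laguerre polynomial `L_n^ν(x) = ∑_{k=0}^n (-1)^k Γ(n+ν+1)/(Γ(k+ν+1)(n-k)!k!) x^k`. -/
noncomputable def Lag (ν : ℝ) (n : ℕ) (x : ℝ) : ℝ :=
  ∑ k ∈ Finset.range (n + 1),
    (-1 : ℝ) ^ k *
      (Real.Gamma ((n : ℝ) + ν + 1) /
        (Real.Gamma ((k : ℝ) + ν + 1) * (Nat.factorial (n - k)) * (Nat.factorial k))) * x ^ k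

/-- Radial Laguerre function in dimension `d`: `Φ_n(r) = L_n^{d/2-1}(2πr²) e^{-πr²}`. -/
noncomputable def LagFun (d : ℕ) (n : ℕ) (r : ℝ) : ℝ :=
  Lag ((d : ℝ) / 2 - 1) n (2 * π * r ^ 2) * Real.exp (-π * r ^ 2)

theorem lag_succ (ν : ℝ) (hν : -1 < ν) (n : ℕ) (x : ℝ) :
    Lag ν (n + 1) x = Lag (ν + 1) (n + 1) x - Lag (ν + 1) n x := by
  unfold Lag
  rw [Finset.sum_range_succ, Finset.sum_range_succ _ (n + 1), add_sub_right_comm,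
    ← Finset.sum_sub_distrib]
  congr 1
  · refine Finset.sum_congr rfl fun k hk => ?_
    obtain ⟨m, rfl⟩ := Nat.exists_eq_add_of_le (Nat.lt_succ_iff.1 (Finset.mem_range.1 hk))
    have hk0 : (0 : ℝ) ≤ k := Nat.cast_nonneg k
    have hm0 : (0 : ℝ) ≤ m := Nat.cast_nonneg m
    have e1 : k + m + 1 - k = m + 1 := by omega
    have e2 : k + m - k = m := by omega
    have g1 : Gamma ((k : ℝ) + (ν + 1) + 1) = (k + ν + 1) * Gamma (k + ν + 1) := by
      rw [← Real.Gamma_add_one (by linarith)]; ring_nf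
    have g2 : Gamma (((k + m + 1 : ℕ) : ℝ) + (ν + 1) + 1)
        = (k + m + ν + 2) * Gamma (k + m + ν + 2) := by
      rw [← Real.Gamma_add_one (by linarith)]; push_cast; ring_nf
    have g3 : Gamma (((k + m : ℕ) : ℝ) + (ν + 1) + 1) = Gamma (k + m + ν + 2) := by
      push_cast; ring_nf
    have g4 : Gamma (((k + m + 1 : ℕ) : ℝ) + ν + 1) = Gamma (k + m + ν + 2) := by
      push_cast; ring_nf
    have n1 : Gamma ((k : ℝ) + ν + 1) ≠ 0 := (Real.Gamma_pos_of_pos (by linarith)).ne'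
    have n2 : (k : ℝ) + ν + 1 ≠ 0 := by linarith
    have n3 : ((m.factorial : ℕ) : ℝ) ≠ 0 := by positivity
    have n4 : ((k.factorial : ℕ) : ℝ) ≠ 0 := by positivity
    have n5 : (m : ℝ) + 1 ≠ 0 := by positivity
    rw [e1, e2, g1, g2, g3, g4, Nat.factorial_succ]
    push_cast
    field_simp
    ring
  · have h : (0 : ℝ) ≤ n := Nat.cast_nonneg n
    have n1 : Gamma (((n + 1 : ℕ) : ℝ) + ν + 1) ≠ 0 :=
      (Real.Gamma_pos_of_pos (by push_cast; linarith)).ne'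
    have n2 : Gamma (((n + 1 : ℕ) : ℝ) + (ν + 1) + 1) ≠ 0 :=
      (Real.Gamma_pos_of_pos (by push_cast; linarith)).ne'
    congr 2
    field_simp

theorem mul_lag_add_one (ν : ℝ) (hν : -1 < ν) (n : ℕ) (x : ℝ) :
    x * Lag (ν + 1) n x = (n + ν + 1) * Lag ν n x - (n + 1) * Lag ν (n + 1) x := by
  have hn0 : (0 : ℝ) ≤ n := Nat.cast_nonneg n
  have G : Gamma (((n + 1 : ℕ) : ℝ) + ν + 1) = (n + ν + 1) * Gamma (n + ν + 1) := by
    rw [← Real.Gamma_add_one (by linarith)]; push_cast; ring_nf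
  have G' : Gamma ((n : ℝ) + (ν + 1) + 1) = (n + ν + 1) * Gamma (n + ν + 1) := by
    rw [← Real.Gamma_add_one (by linarith)]; ring_nf
  have nG : Gamma ((n : ℝ) + ν + 1) ≠ 0 := (Real.Gamma_pos_of_pos (by linarith)).ne'
  have nn : (n : ℝ) + ν + 1 ≠ 0 := by linarith
  have nn' : (n : ℝ) + 1 ≠ 0 := by linarith
  unfold Lag
  rw [Finset.sum_range_succ, Finset.sum_range_succ', Finset.sum_range_succ',
    Finset.sum_range_succ _ n]
  have key : ∀ k ∈ Finset.range n, x * ((-1 : ℝ) ^ k *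
      (Gamma ((n : ℝ) + (ν + 1) + 1) /
        (Gamma ((k : ℝ) + (ν + 1) + 1) * (Nat.factorial (n - k)) * (Nat.factorial k))) * x ^ k)
      = (n + ν + 1) * ((-1 : ℝ) ^ (k + 1) *
      (Gamma ((n : ℝ) + ν + 1) /
        (Gamma (((k + 1 : ℕ) : ℝ) + ν + 1) * (Nat.factorial (n - (k + 1))) *
          (Nat.factorial (k + 1)))) * x ^ (k + 1))
      - (n + 1) * ((-1 : ℝ) ^ (k + 1) *
      (Gamma (((n + 1 : ℕ) : ℝ) + ν + 1) /
        (Gamma (((k + 1 : ℕ) : ℝ) + ν + 1) * (Nat.factorial (n + 1 - (k + 1))) *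
          (Nat.factorial (k + 1)))) * x ^ (k + 1)) := by
    intro k hk
    rw [G, G']
    obtain ⟨m, rfl⟩ := Nat.exists_eq_add_of_le (Nat.succ_le_of_lt (Finset.mem_range.1 hk))
    have hk0 : (0 : ℝ) ≤ k := Nat.cast_nonneg k
    have e1 : k.succ + m - k = m + 1 := by omega
    have e2 : k.succ + m - (k + 1) = m := by omega
    have e3 : k.succ + m + 1 - (k + 1) = m + 1 := by omega
    have g1 : Gamma (((k + 1 : ℕ) : ℝ) + ν + 1) = Gamma (k + (ν + 1) + 1) := by
      push_cast; ring_nf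
    have n1 : Gamma ((k : ℝ) + (ν + 1) + 1) ≠ 0 := (Real.Gamma_pos_of_pos (by linarith)).ne'
    have n3 : ((m.factorial : ℕ) : ℝ) ≠ 0 := by positivity
    have n4 : ((k.factorial : ℕ) : ℝ) ≠ 0 := by positivity
    have n5 : (m : ℝ) + 1 ≠ 0 := by positivity
    have n6 : (k : ℝ) + 1 ≠ 0 := by positivity
    rw [e1, e2, e3, g1, Nat.factorial_succ, Nat.factorial_succ]
    push_cast
    field_simp
    ring
  rw [mul_add, Finset.mul_sum, Finset.sum_congr rfl key, Finset.sum_sub_distrib,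
    ← Finset.mul_sum, ← Finset.mul_sum]
  have htop : x * ((-1 : ℝ) ^ n * (Gamma ((n : ℝ) + (ν + 1) + 1) /
        (Gamma ((n : ℝ) + (ν + 1) + 1) * (Nat.factorial (n - n)) * (Nat.factorial n))) * x ^ n)
      = - ((n + 1) * ((-1 : ℝ) ^ (n + 1) *
      (Gamma (((n + 1 : ℕ) : ℝ) + ν + 1) /
        (Gamma (((n + 1 : ℕ) : ℝ) + ν + 1) * (Nat.factorial (n + 1 - (n + 1))) *
          (Nat.factorial (n + 1)))) * x ^ (n + 1))) := by
    rw [G, G', Nat.sub_self, Nat.sub_self, Nat.factorial_succ n]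
    have n4 : ((n.factorial : ℕ) : ℝ) ≠ 0 := by positivity
    push_cast
    field_simp
    ring
  have hbot : (n + ν + 1) * ((-1 : ℝ) ^ 0 * (Gamma ((n : ℝ) + ν + 1) /
        (Gamma (((0 : ℕ) : ℝ) + ν + 1) * (Nat.factorial (n - 0)) * (Nat.factorial 0))) * x ^ 0)
      = (n + 1) * ((-1 : ℝ) ^ 0 * (Gamma (((n + 1 : ℕ) : ℝ) + ν + 1) /
        (Gamma (((0 : ℕ) : ℝ) + ν + 1) * (Nat.factorial (n + 1 - 0)) *
          (Nat.factorial 0))) * x ^ 0) := by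
    rw [G, Nat.sub_zero, Nat.sub_zero, Nat.factorial_succ n]
    have n4 : ((n.factorial : ℕ) : ℝ) ≠ 0 := by positivity
    have n1 : Gamma (((0 : ℕ) : ℝ) + ν + 1) ≠ 0 :=
      (Real.Gamma_pos_of_pos (by push_cast; linarith)).ne'
    push_cast at n1 ⊢
    field_simp
  rw [htop, mul_add, mul_add, mul_add, hbot]
  ring

/-- The Laguerre differential equation, written as a contiguity relation. -/
theorem mul_lag_add_two (ν : ℝ) (hν : -1 < ν) (n : ℕ) (x : ℝ) :
    x * Lag (ν + 2) n x
      = (ν + 1 - x) * Lag (ν + 1) (n + 1) x - (n + 2) * Lag ν (n + 2) x := by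
  have h1 := mul_lag_add_one (ν + 1) (by linarith) n x
  have h2 := mul_lag_add_one ν hν (n + 1) x
  have h3 := lag_succ ν hν n x
  rw [show ν + 1 + 1 = ν + 2 by ring] at h1
  push_cast at h2
  rw [h1]
  rw [h3] at h2
  linear_combination h2

theorem hasDerivAt_lag (ν : ℝ) (n : ℕ) (x : ℝ) :
    HasDerivAt (Lag ν (n + 1)) (-Lag (ν + 1) n x) x := by
  have h : HasDerivAt (fun x => ∑ k ∈ Finset.range (n + 1 + 1), (-1 : ℝ) ^ k *
      (Real.Gamma (((n + 1 : ℕ) : ℝ) + ν + 1) /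
        (Real.Gamma ((k : ℝ) + ν + 1) * (Nat.factorial (n + 1 - k)) * (Nat.factorial k))) * x ^ k)
      (∑ k ∈ Finset.range (n + 1 + 1), (-1 : ℝ) ^ k *
      (Real.Gamma (((n + 1 : ℕ) : ℝ) + ν + 1) /
        (Real.Gamma ((k : ℝ) + ν + 1) * (Nat.factorial (n + 1 - k)) * (Nat.factorial k))) *
          (k * x ^ (k - 1))) x :=
    HasDerivAt.fun_sum fun k _ => (hasDerivAt_pow k x).const_mul _
  have h' : HasDerivAt (Lag ν (n + 1)) _ x := h
  convert h' using 1
  rw [Finset.sum_range_succ']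
  simp only [Nat.cast_zero, zero_mul, mul_zero, add_zero]
  unfold Lag
  rw [← Finset.sum_neg_distrib]
  refine Finset.sum_congr rfl fun k _ => ?_
  have e1 : n + 1 - (k + 1) = n - k := by omega
  have g1 : Gamma (((k + 1 : ℕ) : ℝ) + ν + 1) = Gamma (k + (ν + 1) + 1) := by
    push_cast; ring_nf
  have g2 : Gamma (((n + 1 : ℕ) : ℝ) + ν + 1) = Gamma (n + (ν + 1) + 1) := by
    push_cast; ring_nf
  have n4 : ((k.factorial : ℕ) : ℝ) ≠ 0 := by positivity
  have n6 : (k : ℝ) + 1 ≠ 0 := by positivity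
  rw [e1, g1, g2, Nat.factorial_succ, Nat.add_sub_cancel]
  push_cast
  by_cases hG : Gamma ((k : ℝ) + (ν + 1) + 1) = 0
  · simp [hG]
  field_simp
  ring

theorem lag_zero_arg (ν : ℝ) (n : ℕ) :
    Lag ν n 0 = Gamma (n + ν + 1) / (Gamma (ν + 1) * n.factorial) := by
  unfold Lag
  rw [Finset.sum_range_succ', Finset.sum_eq_zero]
  · simp
  · intro k _
    simp

theorem lag_zero_arg_pos (ν : ℝ) (hν : -1 < ν) (n : ℕ) : 0 < Lag ν n 0 := by
  rw [lag_zero_arg]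
  have h : (0 : ℝ) ≤ n := Nat.cast_nonneg n
  have := Real.Gamma_pos_of_pos (show 0 < (n : ℝ) + ν + 1 by linarith)
  have := Real.Gamma_pos_of_pos (show 0 < ν + 1 by linarith)
  positivity

@[fun_prop]
theorem continuous_lag (ν : ℝ) (n : ℕ) : Continuous (Lag ν n) := by
  unfold Lag
  fun_prop

/-- Comparison with `cos (l y)` of the solution of the oscillator equation with potential `l² - y²`
starting from value one and slope zero. -/
theorem abs_sub_cos_le_of_hasDerivAt {h h₁ : ℝ → ℝ} {l R : ℝ} (hl : 0 < l)
    (hlR : 2 * R ^ 2 ≤ l ^ 2) (hh : ∀ y, HasDerivAt h (h₁ y) y)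
    (hh₁ : ∀ y, HasDerivAt h₁ (-(l ^ 2 - y ^ 2) * h y) y) (h0 : h 0 = 1) (h10 : h₁ 0 = 0)
    {y : ℝ} (hy : y ∈ Set.Icc 0 R) :
    |h y| ≤ 2 ∧ |l * (h y - cos (l * y))| ≤ 8 * R ^ 3 ∧
      |h₁ y + l * sin (l * y)| ≤ 8 * R ^ 3 := by
  have hbd : ∀ z ∈ Set.Icc 0 R, |h z| ≤ 2 := by
    have hE : ∀ z, HasDerivAt (fun z => h₁ z ^ 2 + (l ^ 2 - z ^ 2) * h z ^ 2)
        (-2 * z * h z ^ 2) z := by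
      intro z
      have := ((hh₁ z).pow 2).add (((hasDerivAt_pow 2 z).const_sub (l ^ 2)).mul ((hh z).pow 2))
      refine this.congr_deriv ?_
      simp
      ring
    have hanti : AntitoneOn (fun z => h₁ z ^ 2 + (l ^ 2 - z ^ 2) * h z ^ 2) (Set.Ici 0) := by
      refine antitoneOn_of_deriv_nonpos (convex_Ici 0)
        (fun z _ => (hE z).continuousAt.continuousWithinAt)
        (fun z _ => (hE z).differentiableAt.differentiableWithinAt) fun z hz => ?_
      rw [interior_Ici] at hz
      rw [(hE z).deriv]
      have : 0 < z := hz
      have := mul_nonneg this.le (sq_nonneg (h z))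
      nlinarith
    intro z hz
    have h1 := hanti (Set.mem_Ici.2 le_rfl) (Set.mem_Ici.2 hz.1) hz.1
    simp only [h0, h10] at h1
    have hz2 : z ^ 2 ≤ R ^ 2 := pow_le_pow_left₀ hz.1 hz.2 2
    have h2 : l ^ 2 / 2 * h z ^ 2 ≤ l ^ 2 := by
      have : l ^ 2 / 2 * h z ^ 2 ≤ (l ^ 2 - z ^ 2) * h z ^ 2 :=
        mul_le_mul_of_nonneg_right (by linarith) (sq_nonneg _)
      nlinarith [sq_nonneg (h₁ z)]
    have h3 : h z ^ 2 ≤ 2 := by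
      have : 0 < l ^ 2 := by positivity
      by_contra hc
      push Not at hc
      nlinarith
    exact abs_le_of_sq_le_sq (by linarith) (by norm_num)
  have hR : 0 ≤ R := hy.1.trans hy.2
  have hlin : ∀ z, HasDerivAt (fun z => l * z) l z := fun z => by
    simpa using (hasDerivAt_id z).const_mul l
  have hw1 : ∀ z, HasDerivAt (fun z => h₁ z * cos (l * z) + l * h z * sin (l * z))
      (z ^ 2 * h z * cos (l * z)) z := by
    intro z
    refine (((hh₁ z).mul (hlin z).cos).add (((hh z).const_mul l).mul (hlin z).sin)).congr_deriv ?_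
    ring
  have hw2 : ∀ z, HasDerivAt (fun z => h₁ z * sin (l * z) - l * h z * cos (l * z))
      (z ^ 2 * h z * sin (l * z)) z := by
    intro z
    refine (((hh₁ z).mul (hlin z).sin).sub (((hh z).const_mul l).mul (hlin z).cos)).congr_deriv ?_
    ring
  have hder : ∀ z ∈ Set.Icc 0 R, ∀ t : ℝ, |t| ≤ 1 → ‖z ^ 2 * h z * t‖ ≤ R ^ 2 * 2 * 1 := by
    intro z hz t ht
    rw [Real.norm_eq_abs, abs_mul, abs_mul, abs_of_nonneg (sq_nonneg z)]
    have := hbd z hz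
    have := pow_le_pow_left₀ hz.1 hz.2 2
    gcongr
  have b1 := (convex_Icc 0 R).norm_image_sub_le_of_norm_hasDerivWithin_le
    (fun z _ => (hw1 z).hasDerivWithinAt) (fun z hz => hder z hz _ (abs_cos_le_one _))
    (Set.left_mem_Icc.2 hR) hy
  have b2 := (convex_Icc 0 R).norm_image_sub_le_of_norm_hasDerivWithin_le
    (fun z _ => (hw2 z).hasDerivWithinAt) (fun z hz => hder z hz _ (abs_sin_le_one _))
    (Set.left_mem_Icc.2 hR) hy
  simp only [Real.norm_eq_abs, h0, h10, mul_zero, cos_zero, sin_zero, sub_zero,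
    mul_one, add_zero, zero_sub, sub_neg_eq_add] at b1 b2
  have hyR : R ^ 2 * 2 * |y| ≤ 2 * R ^ 3 := by
    rw [abs_of_nonneg hy.1]
    nlinarith [hy.2, sq_nonneg R]
  set u := h₁ y * cos (l * y) + l * h y * sin (l * y)
  set v := h₁ y * sin (l * y) - l * h y * cos (l * y) + l with hv
  have hsc := sin_sq_add_cos_sq (l * y)
  have comb : ∀ s t : ℝ, |s| ≤ 1 → |t| ≤ 1 → |u * s + v * t| ≤ 8 * R ^ 3 := by
    intro s t hs ht
    calc |u * s + v * t| ≤ |u| * |s| + |v| * |t| := by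
          rw [← abs_mul, ← abs_mul]; exact abs_add_le _ _
      _ ≤ (2 * R ^ 3) * 1 + (2 * R ^ 3) * 1 := by
          gcongr
          · exact b1.trans hyR
          · exact b2.trans hyR
      _ ≤ 8 * R ^ 3 := by nlinarith [pow_nonneg hR 3]
  refine ⟨hbd y hy, ?_, ?_⟩
  · have e : l * (h y - cos (l * y)) = u * sin (l * y) + v * (-cos (l * y)) := by
      simp only [u, hv]
      linear_combination -(l * h y) * hsc
    rw [e]
    exact comb _ _ (abs_sin_le_one _) (by rw [abs_neg]; exact abs_cos_le_one _)
  · have e : h₁ y + l * sin (l * y) = u * cos (l * y) + v * sin (l * y) := by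
      simp only [u, hv]
      linear_combination -(h₁ y) * hsc
    rw [e]
    exact comb _ _ (abs_cos_le_one _) (abs_sin_le_one _)

theorem hasDerivAt_exp_mul_lag (ν : ℝ) (n : ℕ) (y : ℝ) :
    HasDerivAt (fun y => exp (-(y ^ 2 / 2)) * Lag ν (n + 1) (y ^ 2))
      (exp (-(y ^ 2 / 2)) * (-y * Lag ν (n + 1) (y ^ 2) - 2 * y * Lag (ν + 1) n (y ^ 2))) y := by
  have h1 : HasDerivAt (fun y : ℝ => exp (-(y ^ 2 / 2))) (exp (-(y ^ 2 / 2)) * (-y)) y := by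
    have := ((hasDerivAt_pow 2 y).div_const 2).neg.exp
    refine this.congr_deriv ?_
    simp
  have h2 : HasDerivAt (fun y : ℝ => Lag ν (n + 1) (y ^ 2))
      (-Lag (ν + 1) n (y ^ 2) * (2 * y)) y := by
    have := (hasDerivAt_lag ν n (y ^ 2)).comp y (hasDerivAt_pow 2 y)
    refine this.congr_deriv ?_
    simp
  refine (h1.mul h2).congr_deriv ?_
  ring

/-- Uniform asymptotics of the Hermite-type functions, i.e. Laguerre parameter `-1/2`. -/
theorem lag_neg_half_approx (R : ℝ) (hR : 0 < R) :
    ∃ C : ℝ, 0 < C ∧ ∀ᶠ n : ℕ in atTop, ∀ y ∈ Set.Icc 0 R,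
      |exp (-(y ^ 2 / 2)) * (Lag (-1 / 2) n (y ^ 2) / Lag (-1 / 2) n 0)
        - cos (√(4 * n + 1) * y)| ≤ C / √(4 * n + 1) ∧
      |exp (-(y ^ 2 / 2)) * (y * Lag (1 / 2) (n - 1) (y ^ 2) / Lag (-1 / 2) n 0)
        - √(4 * n + 1) / 2 * sin (√(4 * n + 1) * y)| ≤ C := by
  refine ⟨8 * R ^ 3 + R, by positivity, ?_⟩
  filter_upwards [eventually_ge_atTop 2, eventually_ge_atTop ⌈R ^ 2⌉₊] with n hn2 hnR y hy
  obtain ⟨k, rfl⟩ := Nat.exists_eq_add_of_le' hn2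
  set l := √(4 * ((k + 2 : ℕ) : ℝ) + 1) with hl
  have hl0 : 0 < l := by positivity
  have hl2 : l ^ 2 = 4 * ((k + 2 : ℕ) : ℝ) + 1 := Real.sq_sqrt (by positivity)
  have hkR : R ^ 2 ≤ ((k + 2 : ℕ) : ℝ) := (Nat.le_ceil _).trans (by exact_mod_cast hnR)
  have hlR : 2 * R ^ 2 ≤ l ^ 2 := by nlinarith [sq_nonneg R]
  set a := Lag (-1 / 2) (k + 2) 0 with ha
  have ha0 : 0 < a := lag_zero_arg_pos _ (by norm_num) _
  let h : ℝ → ℝ := fun y => exp (-(y ^ 2 / 2)) * Lag (-1 / 2) (k + 2) (y ^ 2) / a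
  let h₁ : ℝ → ℝ := fun y => exp (-(y ^ 2 / 2)) *
    (-y * Lag (-1 / 2) (k + 2) (y ^ 2) - 2 * y * Lag (1 / 2) (k + 1) (y ^ 2)) / a
  have hd : ∀ y, HasDerivAt h (h₁ y) y := by
    intro y
    have := (hasDerivAt_exp_mul_lag (-1 / 2) (k + 1) y).div_const a
    rw [show (-1 / 2 + 1 : ℝ) = 1 / 2 by norm_num] at this
    exact this
  have hd1 : ∀ y, HasDerivAt h₁ (-(l ^ 2 - y ^ 2) * h y) y := by
    intro y
    have d1 := hasDerivAt_exp_mul_lag (-1 / 2) (k + 1) y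
    have d2 := hasDerivAt_exp_mul_lag (1 / 2) k y
    rw [show (-1 / 2 + 1 : ℝ) = 1 / 2 by norm_num] at d1
    rw [show (1 / 2 + 1 : ℝ) = 3 / 2 by norm_num] at d2
    have d3 := ((((hasDerivAt_id y).neg.mul d1).sub
      (((hasDerivAt_id y).const_mul 2).mul d2)).div_const a)
    have ode := mul_lag_add_two (-1 / 2) (by norm_num) k (y ^ 2)
    rw [show (-1 / 2 + 1 : ℝ) = 1 / 2 by norm_num,
      show (-1 / 2 + 2 : ℝ) = 3 / 2 by norm_num] at ode
    have e : h₁ = fun y => ((-id y) * (exp (-(y ^ 2 / 2)) * Lag (-1 / 2) (k + 1 + 1) (y ^ 2))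
        - 2 * id y * (exp (-(y ^ 2 / 2)) * Lag (1 / 2) (k + 1) (y ^ 2))) / a := by
      funext z
      simp only [h₁, id]
      ring
    rw [e]
    refine d3.congr_deriv ?_
    simp only [h, id, hl2, Pi.neg_apply]
    push_cast
    rw [← mul_div_assoc]
    congr 1
    linear_combination 4 * exp (-(y ^ 2 / 2)) * ode
  have h0 : h 0 = 1 := by
    simp only [h]
    rw [zero_pow two_ne_zero, zero_div, neg_zero, exp_zero, one_mul, ← ha, div_self ha0.ne']
  have h10 : h₁ 0 = 0 := by simp [h₁]
  obtain ⟨b0, b1, b2⟩ := abs_sub_cos_le_of_hasDerivAt hl0 hlR hd hd1 h0 h10 hy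
  constructor
  · rw [← mul_div_assoc]
    rw [abs_mul, abs_of_pos hl0] at b1
    rw [le_div_iff₀ hl0, mul_comm]
    exact b1.trans (by linarith)
  · have e : exp (-(y ^ 2 / 2)) * (y * Lag (1 / 2) (k + 2 - 1) (y ^ 2) / a)
        - l / 2 * sin (l * y) = -(1 / 2) * (h₁ y + l * sin (l * y)) - 1 / 2 * (y * h y) := by
      simp only [h, h₁]
      rw [show k + 2 - 1 = k + 1 by omega]
      ring
    rw [e]
    refine (abs_sub _ _).trans ?_
    rw [abs_mul, abs_mul (1 / 2), abs_mul y, abs_of_nonneg hy.1]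
    norm_num
    have : y * |h y| ≤ R * 2 := mul_le_mul hy.2 b0 (abs_nonneg _) hR.le
    linarith [pow_pos hR 3]

theorem exists_norm_integral_mul_cexp_le {H H' : ℝ → ℝ}
    (hH : ∀ w ∈ Set.Icc (0 : ℝ) 1, HasDerivAt H (H' w) w)
    (hH' : ContinuousOn H' (Set.Icc 0 1)) (h0 : H 0 = 0) :
    ∃ C : ℝ, ∀ μ : ℝ, 0 < μ →
      ‖∫ t in (0 : ℝ)..1, (H (t ^ 2) : ℂ) * Complex.exp (-(μ * t ^ 2) * Complex.I)‖ ≤ C / μ := by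
  obtain ⟨C, hC⟩ := isCompact_Icc.exists_bound_of_continuousOn hH'
  have hC0 : 0 ≤ C := (norm_nonneg _).trans (hC 0 (by simp))
  have hHb : ∀ w ∈ Set.Icc (0 : ℝ) 1, |H w| ≤ C * w := by
    intro w hw
    have := (convex_Icc (0 : ℝ) 1).norm_image_sub_le_of_norm_hasDerivWithin_le
      (fun z hz => (hH z hz).hasDerivWithinAt) hC (Set.left_mem_Icc.2 zero_le_one) hw
    simpa [h0, abs_of_nonneg hw.1] using this
  have hsq : ∀ t ∈ Set.Icc (0 : ℝ) 1, t ^ 2 ∈ Set.Icc (0 : ℝ) 1 := fun t ht =>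
    ⟨sq_nonneg t, pow_le_one₀ ht.1 ht.2⟩
  have hHd : ∀ t ∈ Set.Icc (0 : ℝ) 1,
      HasDerivAt (fun t => H (t ^ 2)) (H' (t ^ 2) * (2 * t)) t := fun t ht => by
    have h1 : HasDerivAt (fun t : ℝ => t ^ 2) (2 * t) t := by simpa using hasDerivAt_pow 2 t
    exact HasDerivAt.comp (h₂ := H) (h := fun t => t ^ 2) t (hH (t ^ 2) (hsq t ht)) h1
  refine ⟨2 * C, fun μ hμ => ?_⟩
  have hμc : (μ : ℂ) ≠ 0 := by exact_mod_cast hμ.ne'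
  let K : ℝ → ℝ := fun t => H (t ^ 2) / t
  let K' : ℝ → ℝ := fun t => 2 * H' (t ^ 2) - H (t ^ 2) / t ^ 2
  let v : ℝ → ℂ := fun t => Complex.exp (-(μ * t ^ 2) * Complex.I) / (-(2 * μ * Complex.I))
  have hKd : ∀ t ∈ Set.Ioo (0 : ℝ) 1, HasDerivAt K (K' t) t := by
    intro t ht
    refine ((hHd t ⟨ht.1.le, ht.2.le⟩).div (hasDerivAt_id t) ht.1.ne').congr_deriv ?_
    have := ht.1.ne'
    simp only [K', id]
    field_simp
  have hvd : ∀ t : ℝ, HasDerivAt v (t * Complex.exp (-(μ * t ^ 2) * Complex.I)) t := by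
    intro t
    have h1 : HasDerivAt (fun t : ℝ => (t : ℂ)) 1 t := Complex.ofRealCLM.hasDerivAt
    have h2 := (((h1.pow 2).const_mul (μ : ℂ)).neg.mul_const Complex.I).cexp.div_const
      (-(2 * μ * Complex.I))
    refine h2.congr_deriv ?_
    have := Complex.I_ne_zero
    field_simp
    simp
    ring_nf
  have hKb : ∀ t ∈ Set.Icc (0 : ℝ) 1, |K t| ≤ C * t := by
    intro t ht
    rcases ht.1.eq_or_lt with rfl | h
    · simp [K]
    · simp only [K]
      rw [abs_div, abs_of_pos h, div_le_iff₀ h]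
      exact (hHb _ (hsq t ht)).trans (by nlinarith)
  have hK'b : ∀ t ∈ Set.Ioc (0 : ℝ) 1, |K' t| ≤ 3 * C := by
    intro t ht
    have ht' : t ∈ Set.Icc (0 : ℝ) 1 := ⟨ht.1.le, ht.2⟩
    refine (abs_sub _ _).trans ?_
    have h1 := hC _ (hsq t ht')
    have h2 : |H (t ^ 2) / t ^ 2| ≤ C := by
      have : 0 < t ^ 2 := pow_pos ht.1 2
      rw [abs_div, abs_of_pos this, div_le_iff₀ this]
      exact hHb _ (hsq t ht')
    rw [abs_mul, abs_of_pos (two_pos : (0 : ℝ) < 2)]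
    rw [Real.norm_eq_abs] at h1
    linarith
  have hKc : ContinuousOn K (Set.Icc 0 1) := by
    intro t ht
    rcases ht.1.eq_or_lt with rfl | h
    · have hK0 : K 0 = 0 := by simp [K]
      rw [ContinuousWithinAt, hK0]
      refine squeeze_zero_norm' (a := fun t => C * t) ?_ ?_
      · filter_upwards [self_mem_nhdsWithin] with t ht using hKb t ht
      · have : Continuous fun t : ℝ => C * t := by fun_prop
        simpa using (this.tendsto 0).mono_left nhdsWithin_le_nhds
    · exact (((hHd t ht).div (hasDerivAt_id t) h.ne').continuousAt).continuousWithinAt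
  have hHc : ContinuousOn (fun t => H (t ^ 2)) (Set.Icc 0 1) := fun t ht =>
    (hHd t ht).continuousAt.continuousWithinAt
  have hK'c : ContinuousOn K' (Set.Ioc 0 1) := by
    have h1 : ContinuousOn (fun t => H' (t ^ 2)) (Set.Ioc 0 1) :=
      hH'.comp (by fun_prop) fun t ht => hsq t ⟨ht.1.le, ht.2⟩
    exact (h1.const_smul (2 : ℝ)).sub ((hHc.mono Set.Ioc_subset_Icc_self).div (by fun_prop)
      fun t ht => (pow_pos ht.1 2).ne')
  have hK'i : IntervalIntegrable (fun t => (K' t : ℂ)) volume 0 1 := by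
    rw [intervalIntegrable_iff_integrableOn_Ioc_of_le zero_le_one]
    refine IntegrableOn.of_bound (C := 3 * C) (by simp)
      ((Complex.continuous_ofReal.comp_continuousOn hK'c).aestronglyMeasurable
        measurableSet_Ioc) ?_
    filter_upwards [ae_restrict_mem measurableSet_Ioc] with t ht
    rw [Complex.norm_real]
    exact hK'b t ht
  have hvn : ∀ t : ℝ, ‖v t‖ = 1 / (2 * μ) := by
    intro t
    simp only [v]
    rw [norm_div, show -((μ : ℂ) * (t : ℂ) ^ 2) * Complex.I
      = ((-(μ * t ^ 2) : ℝ) : ℂ) * Complex.I by push_cast; ring, Complex.norm_exp_ofReal_mul_I]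
    simp [abs_of_pos hμ]
  have hvc : Continuous fun t : ℝ => (t : ℂ) * Complex.exp (-(μ * t ^ 2) * Complex.I) := by
    fun_prop
  have ibp := intervalIntegral.integral_mul_deriv_eq_deriv_mul_of_hasDerivAt
    (a := 0) (b := 1) (u := fun t => (K t : ℂ)) (v := v) (u' := fun t => (K' t : ℂ))
    (v' := fun t => (t : ℂ) * Complex.exp (-(μ * t ^ 2) * Complex.I))
    (by rw [Set.uIcc_of_le zero_le_one]; exact Complex.continuous_ofReal.comp_continuousOn hKc)
    (fun t _ => (hvd t).continuousAt.continuousWithinAt)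
    (by
      intro t ht
      simp only [zero_le_one, min_eq_left, max_eq_right] at ht
      exact (hKd t ht).ofReal_comp)
    (fun t _ => hvd t) hK'i (hvc.intervalIntegrable 0 1)
  have e : ∫ t in (0 : ℝ)..1, (H (t ^ 2) : ℂ) * Complex.exp (-(μ * t ^ 2) * Complex.I)
      = ∫ t in (0 : ℝ)..1, (K t : ℂ) * ((t : ℂ) * Complex.exp (-(μ * t ^ 2) * Complex.I)) := by
    refine intervalIntegral.integral_congr fun t ht => ?_
    simp only [K]
    rcases eq_or_ne t 0 with rfl | h
    · simp [h0]
    · have : (t : ℂ) ≠ 0 := by exact_mod_cast h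
      push_cast
      field_simp
  rw [e, ibp]
  have hK0 : K 0 = 0 := by simp [K]
  have hint : ‖∫ t in (0 : ℝ)..1, (K' t : ℂ) * v t‖ ≤ (3 * C / (2 * μ)) * |(1 : ℝ) - 0| := by
    refine intervalIntegral.norm_integral_le_of_norm_le_const fun t ht => ?_
    rw [Set.uIoc_of_le zero_le_one] at ht
    rw [norm_mul, hvn, Complex.norm_real, mul_one_div]
    exact div_le_div_of_nonneg_right (hK'b t ht) (by positivity)
  have h1 : ‖(K 1 : ℂ) * v 1‖ ≤ C / (2 * μ) := by
    rw [norm_mul, hvn, Complex.norm_real, mul_one_div]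
    refine div_le_div_of_nonneg_right ?_ (by positivity)
    simpa using hKb 1 (by simp)
  simp only [hK0, Complex.ofReal_zero, zero_mul, sub_zero]
  refine (norm_sub_le _ _).trans ((add_le_add h1 hint).trans_eq ?_)
  simp
  field_simp
  ring

theorem norm_integral_Ioi_one_gaussian_le {b : ℂ} (hb : 1 ≤ b.re) :
    ‖∫ t in Set.Ioi (1 : ℝ), Complex.exp (-b * (t : ℂ) ^ 2)‖
      ≤ (1 + ∫ t : ℝ, exp (-1 * t ^ 2)) / ‖b‖ := by
  have hb0 : b ≠ 0 := by
    rintro rfl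
    simp at hb
    linarith
  have hbn : 0 < ‖b‖ := norm_pos_iff.2 hb0
  have hI := integrable_cexp_neg_mul_sq (show 0 < b.re by linarith)
  have hG := integrable_exp_neg_mul_sq (zero_lt_one)
  have hbd : ∀ t : ℝ, ‖Complex.exp (-b * (t : ℂ) ^ 2)‖ ≤ exp (-1 * t ^ 2) := by
    intro t
    rw [norm_cexp_neg_mul_sq]
    refine Real.exp_le_exp.2 ?_
    nlinarith [sq_nonneg t]
  have hJ : IntegrableOn (fun t : ℝ => Complex.exp (-b * (t : ℂ) ^ 2) / (2 * b * t ^ 2))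
      (Set.Ioi 1) := by
    refine Integrable.mono' ((hG.const_mul (1 / ‖b‖)).integrableOn) ?_ ?_
    · refine ContinuousOn.aestronglyMeasurable ?_ measurableSet_Ioi
      refine ContinuousOn.div (by fun_prop) (by fun_prop) fun t ht => ?_
      have : (t : ℂ) ≠ 0 := by
        have : (1 : ℝ) < t := ht
        exact_mod_cast (by linarith : t ≠ 0)
      exact mul_ne_zero (mul_ne_zero two_ne_zero hb0) (pow_ne_zero 2 this)
    · filter_upwards [ae_restrict_mem measurableSet_Ioi] with t ht
      have ht1 : (1 : ℝ) < t := ht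
      rw [norm_div, div_eq_mul_one_div, mul_comm]
      refine mul_le_mul ?_ (hbd t) (norm_nonneg _) (by positivity)
      refine one_div_le_one_div_of_le hbn ?_
      simp only [norm_mul, norm_pow, Complex.norm_real, Real.norm_eq_abs, sq_abs, Complex.norm_ofNat]
      nlinarith [hbn, mul_pos hbn (by nlinarith : (0 : ℝ) < t ^ 2 - 1)]
  have hder : ∀ t ∈ Set.Ici (1 : ℝ), HasDerivAt
      (fun t : ℝ => -(Complex.exp (-b * (t : ℂ) ^ 2) / (2 * b * t)))
      (Complex.exp (-b * (t : ℂ) ^ 2) + Complex.exp (-b * (t : ℂ) ^ 2) / (2 * b * t ^ 2)) t := by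
    intro t ht
    have ht0 : (t : ℂ) ≠ 0 := by
      have : (1 : ℝ) ≤ t := ht
      exact_mod_cast (by linarith : t ≠ 0)
    have h1 : HasDerivAt (fun t : ℝ => (t : ℂ)) 1 t := Complex.ofRealCLM.hasDerivAt
    have h2 := (((h1.fun_pow 2).const_mul (-b)).cexp.fun_div (h1.const_mul (2 * b))
      (mul_ne_zero (mul_ne_zero two_ne_zero hb0) ht0)).fun_neg
    refine h2.congr_deriv ?_
    field_simp
    simp
    ring
  have hlim : Tendsto (fun t : ℝ => -(Complex.exp (-b * (t : ℂ) ^ 2) / (2 * b * t)))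
      atTop (nhds 0) := by
    have ht : Tendsto (fun t : ℝ => (1 / (2 * ‖b‖)) * t⁻¹) atTop (nhds 0) := by
      simpa using tendsto_inv_atTop_zero.const_mul (1 / (2 * ‖b‖))
    refine squeeze_zero_norm' ?_ ht
    filter_upwards [eventually_ge_atTop (1 : ℝ)] with t ht1
    rw [norm_neg, norm_div]
    have h1 : ‖Complex.exp (-b * (t : ℂ) ^ 2)‖ ≤ 1 :=
      (hbd t).trans (Real.exp_le_one_iff.2 (by nlinarith [sq_nonneg t]))
    have h2 : ‖2 * b * (t : ℂ)‖ = 2 * ‖b‖ * t := by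
      simp [abs_of_pos (by linarith : 0 < t)]
    rw [h2, ← one_div, div_mul_div_comm, one_mul]
    gcongr
  have key := integral_Ioi_of_hasDerivAt_of_tendsto' hder (hI.integrableOn.add hJ) hlim
  rw [integral_add hI.integrableOn hJ] at key
  have e : ∫ t in Set.Ioi (1 : ℝ), Complex.exp (-b * (t : ℂ) ^ 2)
      = Complex.exp (-b * ((1 : ℝ) : ℂ) ^ 2) / (2 * b * ((1 : ℝ) : ℂ))
        - ∫ t in Set.Ioi (1 : ℝ), Complex.exp (-b * (t : ℂ) ^ 2) / (2 * b * t ^ 2) := by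
    linear_combination key
  rw [e]
  refine (norm_sub_le _ _).trans ?_
  rw [add_div]
  gcongr
  · rw [norm_div]
    gcongr
    · exact (hbd 1).trans (Real.exp_le_one_iff.2 (by norm_num))
    · simp
      linarith
  · refine (norm_integral_le_of_norm_le (g := fun t => (1 / ‖b‖) * exp (-1 * t ^ 2))
      ((hG.const_mul (1 / ‖b‖)).integrableOn) ?_).trans ?_
    · filter_upwards [ae_restrict_mem measurableSet_Ioi] with t ht
      have ht1 : (1 : ℝ) < t := ht
      rw [norm_div, div_eq_mul_one_div, mul_comm]
      refine mul_le_mul ?_ (hbd t) (norm_nonneg _) (by positivity)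
      refine one_div_le_one_div_of_le hbn ?_
      simp only [norm_mul, norm_pow, Complex.norm_real, Real.norm_eq_abs, sq_abs, Complex.norm_ofNat]
      nlinarith [hbn, mul_pos hbn (by nlinarith : (0 : ℝ) < t ^ 2 - 1)]
    · rw [integral_const_mul, one_div, inv_mul_eq_div]
      exact div_le_div_of_nonneg_right
        (setIntegral_le_integral hG (Eventually.of_forall fun t => (exp_pos _).le)) hbn.le

theorem tendsto_sqrt_mul_integral_gaussian :
    Tendsto (fun μ : ℝ => (√μ : ℂ) * ∫ t in (0 : ℝ)..1, (exp (-t ^ 2) : ℂ) *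
      Complex.exp (-(μ * t ^ 2) * Complex.I)) atTop
      (nhds (√π / 2 * Complex.exp (-(π / 4) * Complex.I))) := by
  have hre : ∀ μ : ℝ, (1 + μ * Complex.I).re = 1 := fun μ => by simp
  have hnorm : ∀ μ : ℝ, |μ| ≤ ‖1 + μ * Complex.I‖ := fun μ => by
    simpa using Complex.abs_im_le_norm (1 + μ * Complex.I)
  have hsplit : ∀ μ : ℝ, ∫ t in (0 : ℝ)..1, (exp (-t ^ 2) : ℂ) *
      Complex.exp (-(μ * t ^ 2) * Complex.I)
      = (π / (1 + μ * Complex.I)) ^ (1 / 2 : ℂ) / 2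
        - ∫ t in Set.Ioi (1 : ℝ), Complex.exp (-(1 + μ * Complex.I) * (t : ℂ) ^ 2) := by
    intro μ
    have hI := integrable_cexp_neg_mul_sq (b := 1 + μ * Complex.I) (by rw [hre]; norm_num)
    rw [← integral_gaussian_complex_Ioi (by rw [hre]; norm_num),
      intervalIntegral.integral_Ioi_sub_Ioi hI.integrableOn zero_le_one]
    refine intervalIntegral.integral_congr fun t _ => ?_
    rw [Complex.ofReal_exp, ← Complex.exp_add]
    push_cast
    ring_nf
  have hroot : ∀ μ : ℝ, 0 < μ → (√μ : ℂ) * (π / (1 + μ * Complex.I)) ^ (1 / 2 : ℂ)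
      = (π / ((μ⁻¹ : ℝ) + Complex.I)) ^ (1 / 2 : ℂ) := by
    intro μ hμ
    have hμc : (μ : ℂ) ≠ 0 := by exact_mod_cast hμ.ne'
    have hb0 : (1 + μ * Complex.I : ℂ) ≠ 0 := fun h => by
      simpa using congrArg Complex.re h
    have hz : (π / (1 + μ * Complex.I) : ℂ) ≠ 0 :=
      div_ne_zero (by exact_mod_cast Real.pi_ne_zero) hb0
    have e : (π / ((μ⁻¹ : ℝ) + Complex.I) : ℂ) = (μ : ℂ) * (π / (1 + μ * Complex.I)) := by
      push_cast
      field_simp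
    rw [e, Complex.cpow_def_of_ne_zero (mul_ne_zero hμc hz), Complex.log_ofReal_mul hμ hz, add_mul,
      Complex.exp_add, ← Complex.cpow_def_of_ne_zero hz]
    congr 1
    rw [Real.sqrt_eq_rpow, Real.rpow_def_of_pos hμ]
    push_cast
    rfl
  have hval : ((π : ℂ) / (((0 : ℝ) : ℂ) + Complex.I)) ^ (1 / 2 : ℂ)
      = √π * Complex.exp (-(π / 4) * Complex.I) := by
    have e : (π : ℂ) / (((0 : ℝ) : ℂ) + Complex.I) = (π : ℂ) * (-Complex.I) := by
      simp [div_eq_mul_inv]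
    have hz : -Complex.I ≠ 0 := neg_ne_zero.2 Complex.I_ne_zero
    have hπ : (π : ℂ) ≠ 0 := by exact_mod_cast Real.pi_ne_zero
    rw [e, Complex.cpow_def_of_ne_zero (mul_ne_zero hπ hz), Complex.log_ofReal_mul Real.pi_pos hz,
      add_mul, Complex.exp_add, Complex.log_neg_I]
    congr 1
    · rw [Real.sqrt_eq_rpow, Real.rpow_def_of_pos Real.pi_pos]
      push_cast
      rfl
    · ring_nf
  have hmain : Tendsto (fun μ : ℝ => (√μ : ℂ) * (π / (1 + μ * Complex.I)) ^ (1 / 2 : ℂ)) atTop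
      (nhds (√π * Complex.exp (-(π / 4) * Complex.I))) := by
    rw [← hval]
    have hinv : Tendsto (fun μ : ℝ => (π : ℂ) / ((μ⁻¹ : ℝ) + Complex.I)) atTop
        (nhds ((π : ℂ) / (((0 : ℝ) : ℂ) + Complex.I))) :=
      tendsto_const_nhds.div (((Complex.continuous_ofReal.tendsto 0).comp
        tendsto_inv_atTop_zero).add_const _) (by simp)
    have hslit : (π : ℂ) / (((0 : ℝ) : ℂ) + Complex.I) ∈ Complex.slitPlane := by
      right
      simp [div_eq_mul_inv, Real.pi_ne_zero]
    refine (hinv.cpow tendsto_const_nhds hslit).congr' ?_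
    filter_upwards [eventually_gt_atTop 0] with μ hμ using (hroot μ hμ).symm
  have htail : Tendsto (fun μ : ℝ => (√μ : ℂ) *
      ∫ t in Set.Ioi (1 : ℝ), Complex.exp (-(1 + μ * Complex.I) * (t : ℂ) ^ 2)) atTop (nhds 0) := by
    have hz : Tendsto (fun μ : ℝ => (1 + ∫ t : ℝ, exp (-1 * t ^ 2)) * (√μ)⁻¹) atTop (nhds 0) := by
      have := (tendsto_inv_atTop_zero.comp Real.tendsto_sqrt_atTop).const_mul
        (1 + ∫ t : ℝ, exp (-1 * t ^ 2))
      rw [mul_zero] at this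
      exact this
    refine squeeze_zero_norm' ?_ hz
    filter_upwards [eventually_gt_atTop 0] with μ hμ
    have h1 := norm_integral_Ioi_one_gaussian_le (b := 1 + μ * Complex.I) (hre μ).ge
    have hs : 0 < √μ := Real.sqrt_pos.2 hμ
    have hJ : 0 ≤ ∫ t : ℝ, exp (-1 * t ^ 2) := integral_nonneg fun t => (exp_pos _).le
    have h2 : (1 + ∫ t : ℝ, exp (-1 * t ^ 2)) / ‖1 + μ * Complex.I‖
        ≤ (1 + ∫ t : ℝ, exp (-1 * t ^ 2)) / μ :=
      div_le_div_of_nonneg_left (by linarith) hμ ((le_abs_self μ).trans (hnorm μ))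
    rw [norm_mul, Complex.norm_real, Real.norm_eq_abs, abs_of_pos hs]
    refine (mul_le_mul_of_nonneg_left (h1.trans h2) hs.le).trans_eq ?_
    rw [← mul_div_assoc, mul_comm, mul_div_assoc, Real.sqrt_div_self', one_div]
  have := (hmain.div_const 2).sub htail
  rw [sub_zero] at this
  rw [show (√π / 2 * Complex.exp (-(π / 4) * Complex.I) : ℂ)
    = √π * Complex.exp (-(π / 4) * Complex.I) / 2 by ring]
  refine this.congr fun μ => ?_
  rw [hsplit]
  ring

theorem integral_comp_sin_eq {g : ℝ → ℂ} (hg : Continuous g) :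
    ∫ θ in (0 : ℝ)..π, g (sin θ)
      = 2 * ∫ t in (0 : ℝ)..1, (2 / √(2 - t ^ 2) : ℝ) • g (1 - t ^ 2) := by
  have h2 : (0 : ℝ) < √2 := by positivity
  have hneg : ∫ φ in (-(π / 2))..0, g (cos φ) = ∫ φ in (0 : ℝ)..(π / 2), g (cos φ) := by
    have := intervalIntegral.integral_comp_neg (a := 0) (b := π / 2) fun φ => g (cos φ)
    simp only [cos_neg, neg_zero] at this
    exact this.symm
  have hshift : ∫ θ in (0 : ℝ)..π, g (sin θ) = ∫ φ in (-(π / 2))..(π / 2), g (cos φ) := by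
    have := intervalIntegral.integral_comp_sub_right (a := 0) (b := π)
      (fun φ => g (cos φ)) (π / 2)
    simp only [cos_sub_pi_div_two] at this
    rw [this]
    congr 1 <;> ring
  have hint : ∀ a b : ℝ, IntervalIntegrable (fun φ => g (cos φ)) volume a b := fun a b =>
    (hg.comp continuous_cos).intervalIntegrable a b
  rw [hshift, ← intervalIntegral.integral_add_adjacent_intervals (hint _ 0) (hint 0 _), hneg,
    ← two_mul]
  congr 1
  have hlt : ∀ t ∈ Set.Icc (0 : ℝ) 1, 0 < 2 - t ^ 2 := fun t ht => by nlinarith [ht.1, ht.2]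
  have hderiv : ∀ t ∈ Set.uIcc (0 : ℝ) 1,
      HasDerivAt (fun t => 2 * arcsin (t / √2)) (2 / √(2 - t ^ 2)) t := by
    intro t ht
    rw [Set.uIcc_of_le zero_le_one] at ht
    have hs : t / √2 < 1 := by
      rw [div_lt_one h2]
      exact ht.2.trans_lt (Real.lt_sqrt_of_sq_lt (by norm_num))
    have hs' : -1 < t / √2 := lt_of_lt_of_le (by norm_num) (div_nonneg ht.1 h2.le)
    have h := ((Real.hasDerivAt_arcsin hs'.ne' hs.ne).comp t
      ((hasDerivAt_id t).div_const √2)).const_mul 2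
    refine h.congr_deriv ?_
    have e : √(1 - (t / √2) ^ 2) = √(2 - t ^ 2) / √2 := by
      rw [← Real.sqrt_div (hlt t ht).le, div_pow, Real.sq_sqrt zero_le_two]
      congr 1
      ring
    have := (Real.sqrt_pos.2 (hlt t ht)).ne'
    rw [e]
    field_simp
  have hsub := intervalIntegral.integral_deriv_smul_comp (g := fun φ => g (cos φ)) hderiv
    (ContinuousOn.div continuousOn_const (by fun_prop) fun t ht =>
      (Real.sqrt_pos.2 (hlt t (by rwa [Set.uIcc_of_le zero_le_one] at ht))).ne')
    (hg.comp continuous_cos)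
  have harc : arcsin (1 / √2) = π / 4 := by
    rw [← Real.sqrt_div_self', ← Real.sin_pi_div_four]
    exact Real.arcsin_sin (by linarith [pi_pos]) (by linarith [pi_pos])
  rw [zero_div, arcsin_zero, mul_zero, harc, show 2 * (π / 4) = π / 2 by ring] at hsub
  rw [← hsub]
  refine intervalIntegral.integral_congr fun t ht => ?_
  rw [Set.uIcc_of_le zero_le_one] at ht
  have hs : t / √2 ≤ 1 := by
    rw [div_le_one h2]
    exact ht.2.trans (Real.le_sqrt_of_sq_le (by norm_num))
  have hs' : -1 ≤ t / √2 := le_trans (by norm_num) (div_nonneg ht.1 h2.le)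
  simp only [Function.comp]
  rw [Real.cos_two_mul', Real.cos_sq', Real.sin_arcsin hs' hs, div_pow, Real.sq_sqrt zero_le_two]
  congr 2
  ring

theorem tendsto_sqrt_mul_integral_sin {G G' : ℝ → ℝ} (hG : ∀ y, HasDerivAt G (G' y) y)
    (hG' : Continuous G') :
    Tendsto (fun μ : ℝ => (√μ : ℂ) * Complex.exp (-(μ * Complex.I)) *
      ∫ θ in (0 : ℝ)..π, (G (sin θ) : ℂ) * Complex.exp (μ * sin θ * Complex.I)) atTop
      (nhds (√(2 * π) * G 1 * Complex.exp (-(π / 4) * Complex.I))) := by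
  have hGc : Continuous G := continuous_iff_continuousAt.2 fun y => (hG y).continuousAt
  set H : ℝ → ℝ := fun w => 2 / √(2 - w) * G (1 - w) - √2 * G 1 * exp (-w) with hHdef
  have hpos : ∀ w ∈ Set.Icc (0 : ℝ) 1, 0 < 2 - w := fun w hw => by linarith [hw.2]
  have hH : ∀ w ∈ Set.Icc (0 : ℝ) 1, HasDerivAt H
      ((-(2 * (-1 / (2 * √(2 - w)))) / √(2 - w) ^ 2) * G (1 - w)
        + 2 / √(2 - w) * (-G' (1 - w)) + √2 * G 1 * exp (-w)) w := by
    intro w hw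
    have h1 : HasDerivAt (fun w : ℝ => √(2 - w)) (-1 / (2 * √(2 - w))) w :=
      ((hasDerivAt_id w).const_sub 2).sqrt (hpos w hw).ne'
    have h2 := (hasDerivAt_const w (2 : ℝ)).fun_div h1 (Real.sqrt_pos.2 (hpos w hw)).ne'
    have h3 : HasDerivAt (fun w : ℝ => G (1 - w)) (-G' (1 - w)) w := by
      have := (hG (1 - w)).comp w ((hasDerivAt_id' w).const_sub 1)
      rw [mul_neg, mul_one] at this
      exact this
    have h4 := ((hasDerivAt_neg w).exp).const_mul (√2 * G 1)
    refine ((h2.fun_mul h3).fun_sub h4).congr_deriv ?_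
    ring
  have hcont : ContinuousOn (fun w => (-(2 * (-1 / (2 * √(2 - w)))) / √(2 - w) ^ 2) * G (1 - w)
        + 2 / √(2 - w) * (-G' (1 - w)) + √2 * G 1 * exp (-w)) (Set.Icc 0 1) := by
    have hs : ContinuousOn (fun w : ℝ => √(2 - w)) (Set.Icc 0 1) := by fun_prop
    have hne : ∀ w ∈ Set.Icc (0 : ℝ) 1, √(2 - w) ≠ 0 := fun w hw =>
      (Real.sqrt_pos.2 (hpos w hw)).ne'
    have hd := ContinuousOn.div (continuousOn_const (c := (-1 : ℝ))) (continuousOn_const.mul hs)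
      fun w hw => mul_ne_zero two_ne_zero (hne w hw)
    exact (((continuousOn_const.mul hd).neg.div (hs.pow 2)
      fun w hw => pow_ne_zero 2 (hne w hw)).mul (by fun_prop)).add
      ((continuousOn_const.div hs hne).mul (by fun_prop)) |>.add (by fun_prop)
  have h0 : H 0 = 0 := by
    simp only [hHdef, sub_zero, neg_zero, exp_zero, mul_one, Real.div_sqrt, sub_self]
  obtain ⟨C, hC⟩ := exists_norm_integral_mul_cexp_le hH hcont h0
  have hzero : Tendsto (fun μ : ℝ => (√μ : ℂ) *
      ∫ t in (0 : ℝ)..1, (H (t ^ 2) : ℂ) * Complex.exp (-(μ * t ^ 2) * Complex.I))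
      atTop (nhds 0) := by
    have hz := (tendsto_inv_atTop_zero.comp Real.tendsto_sqrt_atTop).const_mul C
    rw [mul_zero] at hz
    refine squeeze_zero_norm' ?_ hz
    filter_upwards [eventually_gt_atTop 0] with μ hμ
    have hs : 0 < √μ := Real.sqrt_pos.2 hμ
    rw [norm_mul, Complex.norm_real, Real.norm_eq_abs, abs_of_pos hs]
    refine (mul_le_mul_of_nonneg_left (hC μ hμ) hs.le).trans_eq ?_
    simp only [Function.comp]
    rw [← mul_div_assoc, mul_comm, mul_div_assoc, Real.sqrt_div_self', one_div]
  have hsum := ((tendsto_sqrt_mul_integral_gaussian.const_mul ((√2 * G 1 : ℝ) : ℂ)).add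
    hzero).const_mul 2
  have hlim : (2 * (((√2 * G 1 : ℝ) : ℂ) * (√π / 2 * Complex.exp (-(π / 4) * Complex.I)) + 0) : ℂ)
      = √(2 * π) * G 1 * Complex.exp (-(π / 4) * Complex.I) := by
    rw [Real.sqrt_mul zero_le_two]
    push_cast
    ring
  rw [hlim] at hsum
  refine hsum.congr fun μ => ?_
  have hsub := integral_comp_sin_eq (g := fun s => (G s : ℂ) * Complex.exp (μ * s * Complex.I))
    (by fun_prop)
  rw [hsub]
  have hint1 : IntervalIntegrable (fun t : ℝ => ((√2 * G 1 : ℝ) : ℂ) * ((exp (-t ^ 2) : ℂ) *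
      Complex.exp (-(μ * t ^ 2) * Complex.I))) volume 0 1 :=
    Continuous.intervalIntegrable (by fun_prop) _ _
  have hHc : ContinuousOn H (Set.Icc 0 1) := fun w hw =>
    (hH w hw).continuousAt.continuousWithinAt
  have hmaps : Set.MapsTo (fun t : ℝ => t ^ 2) (Set.Icc 0 1) (Set.Icc 0 1) := fun t ht =>
    ⟨by positivity, by nlinarith [ht.1, ht.2]⟩
  have hint2 : IntervalIntegrable (fun t : ℝ => (H (t ^ 2) : ℂ) *
      Complex.exp (-(μ * t ^ 2) * Complex.I)) volume 0 1 := by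
    refine ContinuousOn.intervalIntegrable ?_
    rw [Set.uIcc_of_le zero_le_one]
    exact (Complex.continuous_ofReal.comp_continuousOn
      (hHc.comp (by fun_prop) hmaps)).mul (by fun_prop)
  have key : Complex.exp (-(μ * Complex.I)) * ∫ t in (0 : ℝ)..1, (2 / √(2 - t ^ 2) : ℝ) •
        ((G (1 - t ^ 2) : ℂ) * Complex.exp (μ * ((1 - t ^ 2 : ℝ) : ℂ) * Complex.I))
      = ((√2 * G 1 : ℝ) : ℂ) * (∫ t in (0 : ℝ)..1, (exp (-t ^ 2) : ℂ) *
          Complex.exp (-(μ * t ^ 2) * Complex.I))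
        + ∫ t in (0 : ℝ)..1, (H (t ^ 2) : ℂ) * Complex.exp (-(μ * t ^ 2) * Complex.I) := by
    rw [← intervalIntegral.integral_const_mul, ← intervalIntegral.integral_const_mul,
      ← intervalIntegral.integral_add hint1 hint2]
    refine intervalIntegral.integral_congr fun t _ => ?_
    have e : Complex.exp (-(μ * t ^ 2) * Complex.I) = Complex.exp (-(μ * Complex.I)) *
        Complex.exp (μ * ((1 - t ^ 2 : ℝ) : ℂ) * Complex.I) := by
      rw [← Complex.exp_add]
      push_cast
      ring_nf
    simp only [hHdef, e, Complex.real_smul]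
    push_cast
    ring
  linear_combination -2 * (√μ : ℂ) * key

theorem integral_sin_pow_two_mul (n : ℕ) :
    ∫ θ in (0 : ℝ)..π, sin θ ^ (2 * n)
      = π * (Gamma (n + 1 / 2) / (Gamma (1 / 2) * n.factorial)) := by
  have hΓ : Gamma (1 / 2) ≠ 0 := (Gamma_pos_of_pos (by norm_num)).ne'
  rw [integral_sin_pow_even]
  congr 1
  induction n with
  | zero =>
    rw [Finset.prod_range_zero, Nat.cast_zero, zero_add, Nat.factorial_zero, Nat.cast_one, mul_one,
      div_self hΓ]
  | succ n ih =>
    rw [Finset.prod_range_succ, ih, Nat.factorial_succ]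
    push_cast
    rw [show (n : ℝ) + 1 + 1 / 2 = (n + 1 / 2) + 1 by ring,
      Gamma_add_one (by positivity : (n : ℝ) + 1 / 2 ≠ 0)]
    have : (n.factorial : ℝ) ≠ 0 := by positivity
    field_simp

theorem integral_sin_pow_mul_lag (j m : ℕ) (x : ℝ) :
    ∫ θ in (0 : ℝ)..π, sin θ ^ (2 * j) * Lag ((j : ℝ) - 1 / 2) m (x * sin θ ^ 2)
      = π * (Lag j m x * Lag (-1 / 2) (m + j) 0) := by
  have hΓ : Gamma (1 / 2) ≠ 0 := (Gamma_pos_of_pos (by norm_num)).ne'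
  have e : ∀ θ : ℝ, sin θ ^ (2 * j) * Lag ((j : ℝ) - 1 / 2) m (x * sin θ ^ 2)
      = ∑ k ∈ Finset.range (m + 1), ((-1 : ℝ) ^ k *
      (Gamma ((m : ℝ) + (j - 1 / 2) + 1) /
        (Gamma ((k : ℝ) + (j - 1 / 2) + 1) * (Nat.factorial (m - k)) * (Nat.factorial k))) * x ^ k)
        * sin θ ^ (2 * (k + j)) := by
    intro θ
    rw [Lag, Finset.mul_sum]
    refine Finset.sum_congr rfl fun k _ => ?_
    rw [mul_pow, ← pow_mul, mul_add, pow_add]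
    ring
  simp_rw [e]
  rw [intervalIntegral.integral_finsetSum fun k _ =>
    Continuous.intervalIntegrable (by fun_prop) _ _]
  rw [lag_zero_arg, Lag, Finset.sum_mul, Finset.mul_sum]
  refine Finset.sum_congr rfl fun k hk => ?_
  rw [intervalIntegral.integral_const_mul, integral_sin_pow_two_mul]
  have h1 : Gamma ((k : ℝ) + j + 1 / 2) ≠ 0 := (Gamma_pos_of_pos (by positivity)).ne'
  have h2 : Gamma ((m : ℝ) + j + 1) = (m + j).factorial := by
    rw [← Gamma_nat_eq_factorial]
    push_cast
    rfl
  have h3 : Gamma ((k : ℝ) + j + 1) = (k + j).factorial := by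
    rw [← Gamma_nat_eq_factorial]
    push_cast
    rfl
  rw [h2, h3]
  push_cast
  rw [show (k : ℝ) + (j - 1 / 2) + 1 = k + j + 1 / 2 by ring,
    show (m : ℝ) + (j - 1 / 2) + 1 = m + j + 1 / 2 by ring,
    show (m : ℝ) + j + -1 / 2 + 1 = m + j + 1 / 2 by ring,
    show (-1 : ℝ) / 2 + 1 = 1 / 2 by ring]
  have h4 : ((m + j).factorial : ℝ) ≠ 0 := by positivity
  have h5 : ((k + j).factorial : ℝ) ≠ 0 := by positivity
  have h6 : ((m - k).factorial : ℝ) ≠ 0 := by positivity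
  have h7 : (k.factorial : ℝ) ≠ 0 := by positivity
  field_simp

theorem tendsto_sqrt_mul_integral_sin_sub {G G' : ℝ → ℝ} (hG : ∀ y, HasDerivAt G (G' y) y)
    (hG' : Continuous G') :
    Tendsto (fun μ : ℝ => √μ * (∫ θ in (0 : ℝ)..π, G (sin θ) * cos (μ * sin θ))
      - √(2 * π) * G 1 * cos (μ - π / 4)) atTop (nhds 0) ∧
    Tendsto (fun μ : ℝ => √μ * (∫ θ in (0 : ℝ)..π, G (sin θ) * sin (μ * sin θ))
      - √(2 * π) * G 1 * sin (μ - π / 4)) atTop (nhds 0) := by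
  have hGc : Continuous G := continuous_iff_continuousAt.2 fun y => (hG y).continuousAt
  have h := (tendsto_sqrt_mul_integral_sin hG hG').sub_const
    (√(2 * π) * G 1 * Complex.exp (-(π / 4) * Complex.I))
  rw [sub_self] at h
  have h' : Tendsto (fun μ : ℝ => (√μ : ℂ) *
      (∫ θ in (0 : ℝ)..π, (G (sin θ) : ℂ) * Complex.exp (μ * sin θ * Complex.I))
      - √(2 * π) * G 1 * Complex.exp ((μ - π / 4 : ℝ) * Complex.I)) atTop (nhds 0) := by
    rw [tendsto_zero_iff_norm_tendsto_zero] at h ⊢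
    refine h.congr fun μ => ?_
    have e : (√μ : ℂ) *
        (∫ θ in (0 : ℝ)..π, (G (sin θ) : ℂ) * Complex.exp (μ * sin θ * Complex.I))
        - √(2 * π) * G 1 * Complex.exp ((μ - π / 4 : ℝ) * Complex.I)
        = Complex.exp (μ * Complex.I) * ((√μ : ℂ) * Complex.exp (-(μ * Complex.I)) *
        (∫ θ in (0 : ℝ)..π, (G (sin θ) : ℂ) * Complex.exp (μ * sin θ * Complex.I))
        - √(2 * π) * G 1 * Complex.exp (-(π / 4) * Complex.I)) := by
      have e1 : Complex.exp (μ * Complex.I) * Complex.exp (-(μ * Complex.I)) = 1 := by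
        rw [← Complex.exp_add, add_neg_cancel, Complex.exp_zero]
      have e2 : Complex.exp ((μ - π / 4 : ℝ) * Complex.I)
          = Complex.exp (μ * Complex.I) * Complex.exp (-(π / 4) * Complex.I) := by
        rw [← Complex.exp_add]
        push_cast
        ring_nf
      rw [e2]
      linear_combination -(√μ : ℂ) *
        (∫ θ in (0 : ℝ)..π, (G (sin θ) : ℂ) * Complex.exp (μ * sin θ * Complex.I)) * e1
    rw [e, norm_mul, Complex.norm_exp_ofReal_mul_I, one_mul]
  have hint : ∀ μ : ℝ, IntervalIntegrable
      (fun θ : ℝ => (G (sin θ) : ℂ) * Complex.exp (μ * sin θ * Complex.I)) volume 0 π := fun μ =>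
    Continuous.intervalIntegrable (by fun_prop) _ _
  have hexp : ∀ μ θ : ℝ, (G (sin θ) : ℂ) * Complex.exp (μ * sin θ * Complex.I)
      = (G (sin θ) : ℂ) * Complex.exp ((μ * sin θ : ℝ) * Complex.I) := fun μ θ => by
    push_cast
    rfl
  constructor
  · have := (Complex.continuous_re.tendsto 0).comp h'
    rw [Complex.zero_re] at this
    refine this.congr fun μ => ?_
    have hre := Complex.reCLM.intervalIntegral_comp_comm (hint μ)
    simp only [Complex.reCLM_apply, hexp, Complex.re_ofReal_mul, Complex.exp_ofReal_mul_I_re] at hre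
    simp only [Function.comp, Complex.sub_re, mul_assoc, Complex.re_ofReal_mul,
      Complex.exp_ofReal_mul_I_re, hre, ← hexp]
  · have := (Complex.continuous_im.tendsto 0).comp h'
    rw [Complex.zero_im] at this
    refine this.congr fun μ => ?_
    have him := Complex.imCLM.intervalIntegral_comp_comm (hint μ)
    simp only [Complex.imCLM_apply, hexp, Complex.im_ofReal_mul, Complex.exp_ofReal_mul_I_im] at him
    simp only [Function.comp, Complex.sub_im, mul_assoc, Complex.im_ofReal_mul,
      Complex.exp_ofReal_mul_I_im]
    simp only [← mul_assoc, hexp, ← him]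

/-- After a positive normalization `c n`, the Laguerre polynomials of order `ν` and `ν + 1` at `r²`
oscillate like `cos (√(4 * n + 1) r - α)` and `sin (√(4 * n + 1) r - α)`. -/
def LagAsymp (ν α r : ℝ) : Prop :=
  ∃ c : ℕ → ℝ, (∀ n, 0 < c n) ∧
    Tendsto (fun n : ℕ => c n * Lag ν n (r ^ 2) - cos (√(4 * n + 1) * r - α)) atTop (nhds 0) ∧
    Tendsto (fun n : ℕ => c n * (2 * r / √(4 * n + 1)) * Lag (ν + 1) (n - 1) (r ^ 2)
      - sin (√(4 * n + 1) * r - α)) atTop (nhds 0)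

theorem tendsto_sqrt_four_mul_add_one :
    Tendsto (fun n : ℕ => √(4 * (n : ℝ) + 1)) atTop atTop := by
  refine Real.tendsto_sqrt_atTop.comp (tendsto_atTop_add_const_right _ _ ?_)
  exact Tendsto.const_mul_atTop four_pos tendsto_natCast_atTop_atTop

theorem lagAsymp_neg_half {r : ℝ} (hr : 0 < r) : LagAsymp (-1 / 2) 0 r := by
  obtain ⟨C, hC, h⟩ := lag_neg_half_approx r hr
  have hpos : ∀ n : ℕ, 0 < Lag (-1 / 2) n 0 := lag_zero_arg_pos _ (by norm_num)
  have hz : Tendsto (fun n : ℕ => C * (√(4 * (n : ℝ) + 1))⁻¹) atTop (nhds 0) := by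
    simpa using (tendsto_inv_atTop_zero.comp tendsto_sqrt_four_mul_add_one).const_mul C
  refine ⟨fun n => exp (-(r ^ 2 / 2)) / Lag (-1 / 2) n 0,
    fun n => div_pos (exp_pos _) (hpos n), ?_, ?_⟩
  · refine squeeze_zero_norm' ?_ hz
    filter_upwards [h] with n hn
    have := (hn r ⟨hr.le, le_rfl⟩).1
    rw [Real.norm_eq_abs, ← div_eq_mul_inv, sub_zero]
    refine le_of_eq_of_le ?_ this
    congr 2
    ring
  · have hz2 := hz.const_mul 2
    rw [mul_zero] at hz2
    refine squeeze_zero_norm' ?_ hz2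
    filter_upwards [h] with n hn
    have h2 := (hn r ⟨hr.le, le_rfl⟩).2
    have hl : 0 < √(4 * (n : ℝ) + 1) := by positivity
    have ha := (hpos n).ne'
    rw [Real.norm_eq_abs, sub_zero, show (-1 / 2 : ℝ) + 1 = 1 / 2 by norm_num]
    have e : exp (-(r ^ 2 / 2)) / Lag (-1 / 2) n 0 * (2 * r / √(4 * (n : ℝ) + 1)) *
        Lag (1 / 2) (n - 1) (r ^ 2) - sin (√(4 * (n : ℝ) + 1) * r)
        = (exp (-(r ^ 2 / 2)) * (r * Lag (1 / 2) (n - 1) (r ^ 2) / Lag (-1 / 2) n 0)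
          - √(4 * (n : ℝ) + 1) / 2 * sin (√(4 * (n : ℝ) + 1) * r))
          * (2 * (√(4 * (n : ℝ) + 1))⁻¹) := by
      field_simp
    rw [e, abs_mul, abs_of_pos (by positivity : 0 < 2 * (√(4 * (n : ℝ) + 1))⁻¹)]
    calc _ ≤ C * (2 * (√(4 * (n : ℝ) + 1))⁻¹) := by gcongr
      _ = _ := by ring

theorem tendsto_sqrt_succ_sub (r α : ℝ) :
    Tendsto (fun n : ℕ => (√(4 * ((n + 1 : ℕ) : ℝ) + 1) * r - α) - (√(4 * (n : ℝ) + 1) * r - α))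
      atTop (nhds 0) := by
  have hz : Tendsto (fun n : ℕ => 4 * |r| * (√(4 * (n : ℝ) + 1))⁻¹) atTop (nhds 0) := by
    simpa using (tendsto_inv_atTop_zero.comp tendsto_sqrt_four_mul_add_one).const_mul (4 * |r|)
  refine squeeze_zero_norm' (Eventually.of_forall fun n => ?_) hz
  set a := √(4 * (n : ℝ) + 1) with ha
  set b := √(4 * ((n + 1 : ℕ) : ℝ) + 1) with hb
  have ha0 : 0 < a := by positivity
  have ha2 : a ^ 2 = 4 * (n : ℝ) + 1 := Real.sq_sqrt (by positivity)
  have hb2 : b ^ 2 = 4 * ((n + 1 : ℕ) : ℝ) + 1 := Real.sq_sqrt (by positivity)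
  push_cast at hb2
  have hab : a ≤ b := Real.sqrt_le_sqrt (by push_cast; linarith)
  rw [Real.norm_eq_abs, show b * r - α - (a * r - α) = (b - a) * r by ring, abs_mul,
    abs_of_nonneg (sub_nonneg.2 hab), mul_right_comm]
  refine mul_le_mul_of_nonneg_right ?_ (abs_nonneg r)
  rw [← div_eq_mul_inv, le_div_iff₀ ha0]
  nlinarith

theorem tendsto_sqrt_sub_two_mul_sqrt (r α : ℝ) :
    Tendsto (fun n : ℕ => (√(4 * (n : ℝ) + 1) * r - α) - (2 * √n * r - α))
      atTop (nhds 0) := by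
  have hz : Tendsto (fun n : ℕ => |r| * (√(4 * (n : ℝ) + 1))⁻¹) atTop (nhds 0) := by
    simpa using (tendsto_inv_atTop_zero.comp tendsto_sqrt_four_mul_add_one).const_mul |r|
  refine squeeze_zero_norm' (Eventually.of_forall fun n => ?_) hz
  set a := √(4 * (n : ℝ) + 1) with ha
  have ha0 : 0 < a := by positivity
  have ha2 : a ^ 2 = 4 * (n : ℝ) + 1 := Real.sq_sqrt (by positivity)
  have hb2 : √(n : ℝ) ^ 2 = n := Real.sq_sqrt (by positivity)
  have hb0 : 0 ≤ √(n : ℝ) := by positivity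
  have hab : 2 * √(n : ℝ) ≤ a := Real.le_sqrt_of_sq_le (by nlinarith)
  rw [Real.norm_eq_abs, show a * r - α - (2 * √n * r - α) = (a - 2 * √n) * r by ring, abs_mul,
    abs_of_nonneg (sub_nonneg.2 hab), mul_comm]
  refine mul_le_mul_of_nonneg_left ?_ (abs_nonneg r)
  rw [← one_div, le_div_iff₀ ha0]
  nlinarith

theorem tendsto_cos_sub_cos {ι : Type*} {l : Filter ι} {u v : ι → ℝ}
    (h : Tendsto (fun i => u i - v i) l (nhds 0)) :
    Tendsto (fun i => cos (u i) - cos (v i)) l (nhds 0) :=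
  squeeze_zero_norm (fun i => Real.abs_cos_sub_cos_le (u i) (v i)) (by simpa using h.abs)

theorem tendsto_sin_sub_sin {ι : Type*} {l : Filter ι} {u v : ι → ℝ}
    (h : Tendsto (fun i => u i - v i) l (nhds 0)) :
    Tendsto (fun i => sin (u i) - sin (v i)) l (nhds 0) :=
  squeeze_zero_norm (fun i => Real.abs_sin_sub_sin_le (u i) (v i)) (by simpa using h.abs)

theorem tendsto_four_mul_div_sqrt_mul_sqrt :
    Tendsto (fun n : ℕ => 4 * ((n : ℝ) + 1) / (√(4 * ((n + 1 : ℕ) : ℝ) + 1) * √(4 * (n : ℝ) + 1)) - 1)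
      atTop (nhds 0) := by
  have hz : Tendsto (fun n : ℕ => 4 * (√(4 * (n : ℝ) + 1))⁻¹) atTop (nhds 0) := by
    simpa using (tendsto_inv_atTop_zero.comp tendsto_sqrt_four_mul_add_one).const_mul 4
  refine squeeze_zero_norm' (Eventually.of_forall fun n => ?_) hz
  set a := √(4 * (n : ℝ) + 1) with ha
  set b := √(4 * ((n + 1 : ℕ) : ℝ) + 1) with hb
  have ha0 : 0 < a := by positivity
  have hb0 : 0 < b := by positivity
  have ha2 : a ^ 2 = 4 * (n : ℝ) + 1 := Real.sq_sqrt (by positivity)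
  have hb2 : b ^ 2 = 4 * ((n + 1 : ℕ) : ℝ) + 1 := Real.sq_sqrt (by positivity)
  push_cast at hb2
  have hab : a ≤ b := Real.sqrt_le_sqrt (by push_cast; linarith)
  have ha1 : 1 ≤ a := Real.one_le_sqrt.2 (by linarith [(Nat.cast_nonneg n : (0 : ℝ) ≤ n)])
  rw [Real.norm_eq_abs, abs_le, ← div_eq_mul_inv]
  constructor
  · rw [neg_le_sub_iff_le_add, div_add_div _ _ (by positivity) ha0.ne', le_div_iff₀ (by positivity)]
    nlinarith [mul_pos ha0 hb0]
  · rw [sub_le_iff_le_add, div_add_one ha0.ne', div_le_div_iff₀ (by positivity) ha0]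
    nlinarith [mul_pos ha0 hb0]

theorem LagAsymp.add_one {ν α r : ℝ} (hν : -1 < ν) (hr : 0 < r) (h : LagAsymp ν α r) :
    LagAsymp (ν + 1) (α + π / 2) r := by
  obtain ⟨c, hc, h1, h2⟩ := h
  have h1' := (tendsto_add_atTop_iff_nat 1).2 h1
  have h2' := (tendsto_add_atTop_iff_nat 1).2 h2
  have hd := tendsto_sqrt_succ_sub r α
  have hA : Tendsto (fun n : ℕ => c (n + 1) * (2 * r / √(4 * ((n + 1 : ℕ) : ℝ) + 1)) *
      Lag (ν + 1) n (r ^ 2) - cos (√(4 * (n : ℝ) + 1) * r - (α + π / 2))) atTop (nhds 0) := by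
    have := h2'.add (tendsto_sin_sub_sin hd)
    rw [add_zero] at this
    refine this.congr fun n => ?_
    rw [show √(4 * (n : ℝ) + 1) * r - (α + π / 2) = (√(4 * (n : ℝ) + 1) * r - α) - π / 2 by ring,
      cos_sub_pi_div_two]
    simp
  refine ⟨fun n => c (n + 1) * (2 * r / √(4 * ((n + 1 : ℕ) : ℝ) + 1)), fun n =>
    mul_pos (hc _) (by positivity), hA, ?_⟩
  have hinv : Tendsto (fun n : ℕ => (ν + 1 - r ^ 2) * (2 / r) * (√(4 * (n : ℝ) + 1))⁻¹) atTop
      (nhds 0) := by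
    simpa using (tendsto_inv_atTop_zero.comp tendsto_sqrt_four_mul_add_one).const_mul
      ((ν + 1 - r ^ 2) * (2 / r))
  have hbdd : ∀ (u : ℕ → ℝ) (φ : ℕ → ℝ), Tendsto (fun n => u n - cos (φ n)) atTop (nhds 0) →
      ∀ ε : ℕ → ℝ, Tendsto ε atTop (nhds 0) → Tendsto (fun n => ε n * u n) atTop (nhds 0) := by
    intro u φ hu ε hε
    have hcos : Tendsto (fun n => ε n * cos (φ n)) atTop (nhds 0) := by
      refine squeeze_zero_norm (fun n => ?_) (by simpa using hε.abs)
      rw [norm_mul]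
      exact mul_le_of_le_one_right (norm_nonneg _) (Real.abs_cos_le_one _)
    have := (hε.mul hu).add hcos
    rw [mul_zero, add_zero] at this
    exact this.congr fun n => by ring
  have hB := hbdd _ _ hA _ hinv
  have hD := hbdd _ _ h1' _ tendsto_four_mul_div_sqrt_mul_sqrt
  have hE := ((hB.sub hD).sub h1').sub (tendsto_cos_sub_cos hd)
  simp only [sub_zero] at hE
  refine hE.congr' ?_
  filter_upwards [eventually_ge_atTop 1] with n hn
  obtain ⟨m, rfl⟩ := Nat.exists_eq_add_of_le' hn
  have hrec := mul_lag_add_two ν hν m (r ^ 2)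
  have e2 : ν + 1 + 1 = ν + 2 := by ring
  have hsin : sin (√(4 * ((m + 1 : ℕ) : ℝ) + 1) * r - (α + π / 2))
      = -cos (√(4 * ((m + 1 : ℕ) : ℝ) + 1) * r - α) := by
    rw [← sub_sub, sin_sub_pi_div_two]
  rw [hsin, Nat.add_sub_cancel, e2]
  have ha : 0 < √(4 * ((m + 1 : ℕ) : ℝ) + 1) := by positivity
  have hb : 0 < √(4 * ((m + 1 + 1 : ℕ) : ℝ) + 1) := by positivity
  set a := √(4 * ((m + 1 : ℕ) : ℝ) + 1)
  set b := √(4 * ((m + 1 + 1 : ℕ) : ℝ) + 1)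
  have hL : Lag (ν + 2) m (r ^ 2) = ((ν + 1 - r ^ 2) * Lag (ν + 1) (m + 1) (r ^ 2)
      - (m + 2) * Lag ν (m + 2) (r ^ 2)) / r ^ 2 := by
    rw [← hrec]
    field_simp
  rw [hL]
  push_cast
  field_simp
  ring

theorem abs_integral_mul_sub_le {f g h : ℝ → ℝ} {A B : ℝ} (hf : Continuous f) (hg : Continuous g)
    (hh : Continuous h) (hA : ∀ θ ∈ Set.Icc 0 π, |h θ| ≤ A)
    (hB : ∀ θ ∈ Set.Icc 0 π, |f θ - g θ| ≤ B) :
    |(∫ θ in (0 : ℝ)..π, h θ * f θ) - ∫ θ in (0 : ℝ)..π, h θ * g θ| ≤ A * B * π := by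
  rw [← intervalIntegral.integral_sub ((hh.fun_mul hf).intervalIntegrable _ _)
    ((hh.fun_mul hg).intervalIntegrable _ _)]
  have := intervalIntegral.norm_integral_le_of_norm_le_const (a := 0) (b := π)
    (f := fun θ => h θ * f θ - h θ * g θ) (C := A * B) ?_
  · rwa [sub_zero, abs_of_pos pi_pos] at this
  · intro θ hθ
    rw [Set.uIoc_of_le pi_pos.le] at hθ
    have hθ' : θ ∈ Set.Icc 0 π := ⟨hθ.1.le, hθ.2⟩
    rw [← mul_sub, Real.norm_eq_abs, abs_mul]
    exact mul_le_mul (hA θ hθ') (hB θ hθ') (abs_nonneg _) ((abs_nonneg _).trans (hA θ hθ'))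

theorem lagAsymp_zero {r : ℝ} (hr : 0 < r) : LagAsymp 0 (π / 4) r := by
  obtain ⟨C, hC, h⟩ := lag_neg_half_approx r hr
  have hpos : ∀ n : ℕ, 0 < Lag (-1 / 2) n 0 := lag_zero_arg_pos _ (by norm_num)
  set E := exp (r ^ 2 / 2) with hE
  have hE0 : 0 < E := exp_pos _
  set K := √(2 * π) * E with hK
  have hK0 : 0 < K := by positivity
  set G : ℝ → ℝ := fun s => exp (r ^ 2 * s ^ 2 / 2) with hGdef
  have hGd : ∀ s, HasDerivAt G (exp (r ^ 2 * s ^ 2 / 2) * (r ^ 2 * s)) s := by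
    intro s
    have := ((((hasDerivAt_pow 2 s).const_mul (r ^ 2)).div_const 2).exp)
    refine this.congr_deriv ?_
    push_cast
    ring
  have hG1 : G 1 = E := by simp [hGdef, hE]
  have hGc : Continuous G := by fun_prop
  have hcos := (tendsto_sqrt_mul_integral_sin_sub hGd (by fun_prop)).1
  have hsin := (tendsto_sqrt_mul_integral_sin_sub (G := fun s => s * G s)
    (fun s => (hasDerivAt_id' s).fun_mul (hGd s)) (by fun_prop)).2
  rw [hG1] at hcos
  simp only [one_mul, hG1] at hsin
  have hμ : Tendsto (fun n : ℕ => √(4 * (n : ℝ) + 1) * r) atTop atTop :=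
    tendsto_sqrt_four_mul_add_one.atTop_mul_const hr
  have hGE : ∀ θ ∈ Set.Icc (0 : ℝ) π, |G (sin θ)| ≤ E := by
    intro θ _
    rw [abs_of_pos (exp_pos _)]
    refine exp_le_exp.2 ?_
    nlinarith [sin_sq_le_one θ, sq_nonneg r]
  have hGE' : ∀ θ ∈ Set.Icc (0 : ℝ) π, |sin θ * G (sin θ)| ≤ E := by
    intro θ hθ
    rw [abs_mul]
    exact (mul_le_of_le_one_left (abs_nonneg _) (abs_sin_le_one θ)).trans (hGE θ hθ)
  have hmem : ∀ θ ∈ Set.Icc (0 : ℝ) π, r * sin θ ∈ Set.Icc 0 r := fun θ hθ =>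
    ⟨mul_nonneg hr.le (sin_nonneg_of_mem_Icc hθ), mul_le_of_le_one_right hr.le (sin_le_one θ)⟩
  have hGinv : ∀ θ, G (sin θ) * exp (-((r * sin θ) ^ 2 / 2)) = 1 := by
    intro θ
    rw [hGdef, ← exp_add, ← exp_zero]
    ring_nf
  have hform0 : ∀ n : ℕ, π * Lag 0 n (r ^ 2) = ∫ θ in (0 : ℝ)..π, G (sin θ) *
      (exp (-((r * sin θ) ^ 2 / 2)) * (Lag (-1 / 2) n ((r * sin θ) ^ 2) / Lag (-1 / 2) n 0)) := by
    intro n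
    have := integral_sin_pow_mul_lag 0 n (r ^ 2)
    have ha := (hpos n).ne'
    simp only [mul_zero, pow_zero, one_mul, Nat.cast_zero, add_zero, zero_sub, ← neg_div] at this
    rw [← mul_assoc, ← div_eq_iff ha, ← intervalIntegral.integral_div] at this
    rw [← this]
    refine intervalIntegral.integral_congr fun θ _ => ?_
    rw [← mul_assoc, hGinv, one_mul, mul_pow]
  have hform1 : ∀ n : ℕ, 1 ≤ n → π * (r * Lag 1 (n - 1) (r ^ 2)) =
      ∫ θ in (0 : ℝ)..π, (sin θ * G (sin θ)) * (exp (-((r * sin θ) ^ 2 / 2)) *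
        ((r * sin θ) * Lag (1 / 2) (n - 1) ((r * sin θ) ^ 2) / Lag (-1 / 2) n 0)) := by
    intro n hn
    have := integral_sin_pow_mul_lag 1 (n - 1) (r ^ 2)
    have ha := (hpos n).ne'
    rw [Nat.sub_add_cancel hn] at this
    simp only [mul_one, Nat.cast_one, show (1 : ℝ) - 1 / 2 = 1 / 2 by norm_num] at this
    rw [← mul_assoc, ← div_eq_iff ha, ← intervalIntegral.integral_div] at this
    rw [mul_left_comm, ← this, ← intervalIntegral.integral_const_mul]
    refine intervalIntegral.integral_congr fun θ _ => ?_
    rw [mul_assoc (sin θ), ← mul_assoc (G (sin θ)), hGinv, one_mul, mul_pow]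
    ring
  have hsqrt : ∀ n : ℕ, √(√(4 * (n : ℝ) + 1) * r) * (√(4 * (n : ℝ) + 1))⁻¹
      = r * (√(√(4 * (n : ℝ) + 1) * r))⁻¹ := by
    intro n
    have hl : 0 < √(4 * (n : ℝ) + 1) := by positivity
    have hm : 0 < √(√(4 * (n : ℝ) + 1) * r) := by positivity
    have := Real.mul_self_sqrt (mul_pos hl hr).le
    field_simp
    linarith
  have hz : Tendsto (fun n : ℕ => √(√(4 * (n : ℝ) + 1) * r) * (√(4 * (n : ℝ) + 1))⁻¹) atTop
      (nhds 0) := by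
    have := (tendsto_inv_atTop_zero.comp (Real.tendsto_sqrt_atTop.comp hμ)).const_mul r
    rw [mul_zero] at this
    exact this.congr fun n => (hsqrt n).symm
  refine ⟨fun n => π * √(√(4 * (n : ℝ) + 1) * r) / K, fun n => by positivity, ?_, ?_⟩
  · have h1 := (hcos.comp hμ).div_const K
    have h2 : Tendsto (fun n : ℕ => √(√(4 * (n : ℝ) + 1) * r) *
        (π * Lag 0 n (r ^ 2) - ∫ θ in (0 : ℝ)..π, G (sin θ) *
          cos (√(4 * (n : ℝ) + 1) * r * sin θ))) atTop (nhds 0) := by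
      have hz' := hz.const_mul (E * C * π)
      rw [mul_zero] at hz'
      refine squeeze_zero_norm' ?_ hz'
      filter_upwards [h] with n hn
      rw [norm_mul, Real.norm_eq_abs, Real.norm_eq_abs, abs_of_nonneg (Real.sqrt_nonneg _), hform0]
      have := abs_integral_mul_sub_le
        (f := fun θ => exp (-((r * sin θ) ^ 2 / 2)) *
          (Lag (-1 / 2) n ((r * sin θ) ^ 2) / Lag (-1 / 2) n 0))
        (g := fun θ => cos (√(4 * (n : ℝ) + 1) * r * sin θ)) (h := fun θ => G (sin θ))
        (by fun_prop) (by fun_prop) (by fun_prop) hGE (B := C / √(4 * (n : ℝ) + 1))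
        (fun θ hθ => by
          have := (hn _ (hmem θ hθ)).1
          rwa [← mul_assoc] at this)
      refine (mul_le_mul_of_nonneg_left this (Real.sqrt_nonneg _)).trans_eq ?_
      ring
    have h3 := h1.add (h2.div_const K)
    simp only [zero_div, add_zero] at h3
    refine h3.congr fun n => ?_
    simp only [Function.comp]
    field_simp
    ring
  · have h1 := (hsin.comp hμ).div_const K
    have h2 : Tendsto (fun n : ℕ => √(√(4 * (n : ℝ) + 1) * r) *
        (2 / √(4 * (n : ℝ) + 1) * (π * (r * Lag 1 (n - 1) (r ^ 2))) -
          ∫ θ in (0 : ℝ)..π, (sin θ * G (sin θ)) *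
          sin (√(4 * (n : ℝ) + 1) * r * sin θ))) atTop (nhds 0) := by
      have hz' := hz.const_mul (E * (2 * C) * π)
      rw [mul_zero] at hz'
      refine squeeze_zero_norm' ?_ hz'
      filter_upwards [h, eventually_ge_atTop 1] with n hn hn1
      have hl : 0 < √(4 * (n : ℝ) + 1) := by positivity
      rw [norm_mul, Real.norm_eq_abs, Real.norm_eq_abs, abs_of_nonneg (Real.sqrt_nonneg _),
        hform1 n hn1, ← intervalIntegral.integral_const_mul]
      simp only [mul_left_comm (2 / √(4 * (n : ℝ) + 1))]
      have := abs_integral_mul_sub_le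
        (f := fun θ => exp (-((r * sin θ) ^ 2 / 2)) * (2 / √(4 * (n : ℝ) + 1) *
          ((r * sin θ) * Lag (1 / 2) (n - 1) ((r * sin θ) ^ 2) / Lag (-1 / 2) n 0)))
        (g := fun θ => sin (√(4 * (n : ℝ) + 1) * r * sin θ)) (h := fun θ => sin θ * G (sin θ))
        (by fun_prop) (by fun_prop) (by fun_prop) hGE' (B := 2 / √(4 * (n : ℝ) + 1) * C)
        (fun θ hθ => by
          have := mul_le_mul_of_nonneg_left (hn _ (hmem θ hθ)).2
            (by positivity : 0 ≤ 2 / √(4 * (n : ℝ) + 1))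
          rw [← abs_of_pos (by positivity : 0 < 2 / √(4 * (n : ℝ) + 1)), ← abs_mul,
            abs_of_pos (by positivity : 0 < 2 / √(4 * (n : ℝ) + 1))] at this
          refine le_of_eq_of_le ?_ this
          congr 1
          rw [← mul_assoc (√(4 * (n : ℝ) + 1)) r, mul_sub]
          field_simp)
      refine (mul_le_mul_of_nonneg_left this (Real.sqrt_nonneg _)).trans_eq ?_
      ring
    have h3 := h1.add (h2.div_const K)
    simp only [zero_div, add_zero] at h3
    refine h3.congr fun n => ?_
    have hl : 0 < √(4 * (n : ℝ) + 1) := by positivity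
    simp only [Function.comp, zero_add]
    field_simp
    ring

theorem lagAsymp_dim (d : ℕ) {r : ℝ} (hr : 0 < r) :
    LagAsymp (((d + 1 : ℕ) : ℝ) / 2 - 1) (d * π / 4) r := by
  induction d using Nat.twoStepInduction with
  | zero => simpa [show (2 : ℝ)⁻¹ - 1 = -1 / 2 by norm_num] using lagAsymp_neg_half hr
  | one => simpa [show (1 : ℝ) + 1 = 2 by norm_num] using lagAsymp_zero hr
  | more d ih _ =>
    have := ih.add_one (by push_cast; linarith [(Nat.cast_nonneg d : (0 : ℝ) ≤ d)]) hr
    convert this using 1 <;> push_cast <;> ring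

theorem exists_pos_tendsto_lag_sub_cos (d : ℕ) {r : ℝ} (hr : 0 < r) :
    ∃ c : ℕ → ℝ, (∀ n, 0 < c n) ∧
      Tendsto (fun n : ℕ => c n * Lag (((d + 1 : ℕ) : ℝ) / 2 - 1) n (r ^ 2)
        - cos (2 * √n * r - d * π / 4)) atTop (nhds 0) := by
  obtain ⟨c, hc, h, -⟩ := lagAsymp_dim d hr
  refine ⟨c, hc, ?_⟩
  have := h.add (tendsto_cos_sub_cos (tendsto_sqrt_sub_two_mul_sqrt r (d * π / 4)))
  rw [add_zero] at this
  exact this.congr fun n => by ring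

theorem uniformContinuous_of_periodic_one {F : ℝ → ℝ} (hF : Continuous F)
    (hper : Function.Periodic F 1) : UniformContinuous F := by
  have hK := (isCompact_Icc (a := (-1 : ℝ)) (b := 2)).uniformContinuousOn_of_continuous
    hF.continuousOn
  rw [Metric.uniformContinuousOn_iff] at hK
  refine Metric.uniformContinuous_iff.2 fun ε hε => ?_
  obtain ⟨δ, hδ, h⟩ := hK ε hε
  refine ⟨min δ 1, lt_min hδ one_pos, fun {x y} hxy => ?_⟩
  have hsub : ∀ z, F (z - ⌊x⌋) = F z := fun z => by
    simpa using (hper.sub_int_mul_eq (x := z) ⌊x⌋)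
  rw [Real.dist_eq, lt_min_iff] at hxy
  have h0 := Int.floor_le x
  have h1 := Int.lt_floor_add_one x
  have h2 := abs_lt.1 hxy.2
  have := h (x - ⌊x⌋) ⟨by linarith, by linarith⟩ (y - ⌊x⌋) ⟨by linarith, by linarith⟩
    (by rw [Real.dist_eq, sub_sub_sub_cancel_right]; exact hxy.1)
  rwa [hsub, hsub] at this

theorem tendsto_average_sqrt_of_integral_eq_zero {f : ℝ → ℝ} (hf : Continuous f)
    (hper : Function.Periodic f 1) (hint : ∫ x in (0 : ℝ)..1, f x = 0) {c : ℝ} (hc : 0 < c) :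
    Tendsto (fun N : ℕ => (∑ n ∈ Finset.range N, f (c * √n)) / N) atTop (nhds 0) := by
  set G : ℝ → ℝ := fun t => ∫ x in (0 : ℝ)..t, f x with hGdef
  have hGd : ∀ t, HasDerivAt G (f t) t := fun t => hf.integral_hasStrictDerivAt 0 t |>.hasDerivAt
  have hGc : Continuous G := continuous_iff_continuousAt.2 fun t => (hGd t).continuousAt
  have hGper : Function.Periodic G 1 := by
    intro t
    have := hper.intervalIntegral_add_eq_add 0 t fun a b => hf.intervalIntegrable a b
    rw [zero_add, hint, add_zero] at this
    exact this
  obtain ⟨B, hB⟩ := (hGper.isBounded_of_continuous one_ne_zero hGc).exists_norm_le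
  have hB' : ∀ t, |G t| ≤ B := fun t => hB _ ⟨t, rfl⟩
  have hB0 : 0 ≤ B := (abs_nonneg _).trans (hB' 0)
  set K : ℝ → ℝ := fun u => 2 * √u / c * G (c * √u) with hKdef
  have hKd : ∀ u, 0 < u → HasDerivAt K (f (c * √u) + G (c * √u) / (c * √u)) u := by
    intro u hu
    have hs := (hasDerivAt_id' u).sqrt hu.ne'
    have hsp : 0 < √u := Real.sqrt_pos.2 hu
    have h1 := (hs.const_mul 2).div_const c
    have h2 : HasDerivAt (fun u => G (c * √u)) (f (c * √u) * (c * (1 / (2 * √u)))) u :=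
      HasDerivAt.comp (h₂ := G) (h := fun y => c * √y) u (hGd (c * √u)) (hs.const_mul c)
    refine (h1.fun_mul h2).congr_deriv ?_
    field_simp
    ring
  have hsqrt : Tendsto (fun n : ℕ => √(n : ℝ)) atTop atTop :=
    Real.tendsto_sqrt_atTop.comp tendsto_natCast_atTop_atTop
  have hinv : ∀ C : ℝ, Tendsto (fun n : ℕ => C * (√(n : ℝ))⁻¹) atTop (nhds 0) := fun C => by
    simpa using (tendsto_inv_atTop_zero.comp hsqrt).const_mul C
  have hstep : Tendsto (fun n : ℕ => f (c * √n) - (K ((n + 1 : ℕ) : ℝ) - K n)) atTop (nhds 0) := by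
    have hex : ∀ n : ℕ, ∃ ξ : ℝ, 1 ≤ n → (ξ ∈ Set.Ioo (n : ℝ) (n + 1 : ℕ) ∧
        K ((n + 1 : ℕ) : ℝ) - K n = f (c * √ξ) + G (c * √ξ) / (c * √ξ)) := by
      intro n
      by_cases hn : 1 ≤ n
      · have hn0 : (0 : ℝ) < n := by exact_mod_cast hn
        obtain ⟨ξ, hξ, e⟩ := exists_hasDerivAt_eq_slope K
          (fun u => f (c * √u) + G (c * √u) / (c * √u))
          (show (n : ℝ) < (n + 1 : ℕ) by push_cast; linarith)
          (fun u hu => (hKd u (hn0.trans_le hu.1)).continuousAt.continuousWithinAt)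
          (fun u hu => hKd u (hn0.trans hu.1))
        refine ⟨ξ, fun _ => ⟨hξ, ?_⟩⟩
        rw [e]
        push_cast
        rw [add_sub_cancel_left, div_one]
      · exact ⟨0, fun h => absurd h hn⟩
    choose ξ hξ using hex
    have hu := uniformContinuous_of_periodic_one hf hper
    have hphase : Tendsto (fun n : ℕ => dist (c * √(n : ℝ)) (c * √(ξ n))) atTop (nhds 0) := by
      refine squeeze_zero' (Eventually.of_forall fun n => dist_nonneg) ?_ (hinv c)
      filter_upwards [eventually_ge_atTop 1] with n hn
      have hn0 : (0 : ℝ) < n := by exact_mod_cast hn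
      obtain ⟨⟨hl, hr⟩, -⟩ := hξ n hn
      push_cast at hr
      have ha : 0 < √(n : ℝ) := Real.sqrt_pos.2 hn0
      have hab : √(n : ℝ) ≤ √(ξ n) := Real.sqrt_le_sqrt hl.le
      have ha2 : √(n : ℝ) ^ 2 = n := Real.sq_sqrt hn0.le
      have hb2 : √(ξ n) ^ 2 = ξ n := Real.sq_sqrt (hn0.trans hl).le
      rw [dist_comm, Real.dist_eq, ← mul_sub, abs_mul, abs_of_pos hc,
        abs_of_nonneg (sub_nonneg.2 hab)]
      refine mul_le_mul_of_nonneg_left ?_ hc.le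
      rw [← one_div, le_div_iff₀ ha]
      nlinarith
    have hfd : Tendsto (fun n : ℕ => f (c * √(n : ℝ)) - f (c * √(ξ n))) atTop (nhds 0) := by
      rw [Metric.tendsto_atTop] at hphase ⊢
      intro ε hε
      obtain ⟨δ, hδ, h⟩ := Metric.uniformContinuous_iff.1 hu ε hε
      obtain ⟨N, hN⟩ := hphase δ hδ
      refine ⟨N, fun n hn => ?_⟩
      have := hN n hn
      rw [Real.dist_0_eq_abs, abs_of_nonneg dist_nonneg] at this
      rw [Real.dist_0_eq_abs, ← Real.dist_eq]
      exact h this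
    have hGd0 : Tendsto (fun n : ℕ => G (c * √(ξ n)) / (c * √(ξ n))) atTop (nhds 0) := by
      refine squeeze_zero_norm' ?_ (hinv (B / c))
      filter_upwards [eventually_ge_atTop 1] with n hn
      have hn0 : (0 : ℝ) < n := by exact_mod_cast hn
      obtain ⟨⟨hl, -⟩, -⟩ := hξ n hn
      have ha : 0 < √(n : ℝ) := Real.sqrt_pos.2 hn0
      have hab : √(n : ℝ) ≤ √(ξ n) := Real.sqrt_le_sqrt hl.le
      have hb : 0 < √(ξ n) := ha.trans_le hab
      rw [Real.norm_eq_abs, abs_div, abs_of_pos (mul_pos hc hb), ← div_eq_mul_inv, div_div]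
      exact div_le_div₀ hB0 (hB' _) (mul_pos hc ha) (mul_le_mul_of_nonneg_left hab hc.le)
    have := hfd.sub hGd0
    rw [sub_zero] at this
    refine this.congr' ?_
    filter_upwards [eventually_ge_atTop 1] with n hn
    rw [(hξ n hn).2]
    ring
  have hces := hstep.cesaro
  have hKN : Tendsto (fun N : ℕ => K N / N) atTop (nhds 0) := by
    refine squeeze_zero_norm' ?_ (hinv (2 * B / c))
    filter_upwards [eventually_ge_atTop 1] with n hn
    have hn0 : (0 : ℝ) < n := by exact_mod_cast hn
    have ha : 0 < √(n : ℝ) := Real.sqrt_pos.2 hn0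
    have ha2 : √(n : ℝ) * √n = n := Real.mul_self_sqrt hn0.le
    have e : K n / n = (2 / c * (√(n : ℝ))⁻¹) * G (c * √n) := by
      simp only [hKdef]
      rw [div_eq_iff hn0.ne']
      nth_rewrite 5 [← ha2]
      field_simp
    rw [e, norm_mul, Real.norm_eq_abs, Real.norm_eq_abs,
      abs_of_pos (by positivity : 0 < 2 / c * (√(n : ℝ))⁻¹)]
    calc _ ≤ 2 / c * (√(n : ℝ))⁻¹ * B := by gcongr; exact hB' _
      _ = _ := by ring
  have := hces.add hKN
  rw [add_zero] at this
  refine this.congr fun N => ?_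
  have hK0 : K ((0 : ℕ) : ℝ) = 0 := by simp [hKdef]
  rw [Finset.sum_sub_distrib, Finset.sum_range_sub (fun n : ℕ => K (n : ℝ)), hK0, sub_zero]
  ring

theorem tendsto_average_sqrt {F : ℝ → ℝ} (hF : Continuous F)
    (hper : Function.Periodic F 1) {c : ℝ} (hc : 0 < c) :
    Tendsto (fun N : ℕ => (∑ n ∈ Finset.range N, F (c * √n)) / N) atTop
      (nhds (∫ x in (0 : ℝ)..1, F x)) := by
  have h := tendsto_average_sqrt_of_integral_eq_zero (f := fun x => F x - ∫ x in (0 : ℝ)..1, F x)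
    (by fun_prop) (fun x => by simp [hper x])
    (by rw [intervalIntegral.integral_sub (hF.intervalIntegrable _ _) (by simp)]; simp) hc
  have := h.add_const (∫ x in (0 : ℝ)..1, F x)
  rw [zero_add] at this
  refine this.congr' ?_
  filter_upwards [eventually_ge_atTop 1] with N hN
  have hN0 : (N : ℝ) ≠ 0 := by positivity
  rw [Finset.sum_sub_distrib, Finset.sum_const, Finset.card_range, nsmul_eq_mul]
  field_simp
  ring

theorem eventually_lt_average_of_sign {w : ℝ → ℝ} (hw : Continuous w)
    (hper : Function.Periodic w 1) {c : ℝ} (hc : 0 < c) {z χ : ℕ → ℝ}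
    (hzw : Tendsto (fun n : ℕ => z n - w (c * √n)) atTop (nhds 0))
    (h0 : ∀ n, 0 ≤ χ n) (hpos : ∀ n, 0 < z n → χ n = 1) {a : ℝ}
    (ha : a < ∫ x in (0 : ℝ)..1, if 0 < w x then (1 : ℝ) else 0) :
    ∀ᶠ N : ℕ in atTop, a < (∑ n ∈ Finset.range N, χ n) / N := by
  set l : ℕ → ℝ → ℝ := fun k y => max 0 (min 1 (k * y - 1)) with hl
  have hlc : ∀ k, Continuous (l k) := fun k => by fun_prop
  have hdom : Tendsto (fun k : ℕ => ∫ x in (0 : ℝ)..1, l k (w x)) atTop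
      (nhds (∫ x in (0 : ℝ)..1, if 0 < w x then (1 : ℝ) else 0)) := by
    refine intervalIntegral.tendsto_integral_filter_of_dominated_convergence (fun _ => 1)
      (Eventually.of_forall fun k => ((hlc k).comp hw).aestronglyMeasurable)
      (Eventually.of_forall fun k => Eventually.of_forall fun x _ => ?_) (by simp)
      (Eventually.of_forall fun x _ => ?_)
    · rw [Real.norm_eq_abs, abs_of_nonneg (le_max_left _ _)]
      exact max_le zero_le_one (min_le_left _ _)
    · split_ifs with hx
      · refine tendsto_const_nhds.congr' ?_
        obtain ⟨m, hm⟩ := exists_nat_ge (2 / w x)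
        filter_upwards [eventually_ge_atTop m] with k hk
        have : 2 ≤ k * w x := by
          rw [div_le_iff₀ hx] at hm
          refine hm.trans ?_
          gcongr
        simp only [hl]
        rw [min_eq_left (by linarith), max_eq_right zero_le_one]
      · refine tendsto_const_nhds.congr fun k => ?_
        have : (k : ℝ) * w x ≤ 0 := mul_nonpos_of_nonneg_of_nonpos (Nat.cast_nonneg k) (not_lt.1 hx)
        simp only [hl]
        rw [max_eq_left ((min_le_right _ _).trans (by linarith))]
  obtain ⟨k, hk, hk1⟩ := ((hdom.eventually (lt_mem_nhds ha)).and (eventually_ge_atTop 1)).exists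
  have hk0 : (0 : ℝ) < k := by exact_mod_cast hk1
  have havg := tendsto_average_sqrt ((hlc k).comp hw) (fun x => by simp [hper x]) hc
  have herr : Tendsto (fun n : ℕ => max 0 (l k (w (c * √n)) - χ n)) atTop (nhds 0) := by
    refine tendsto_const_nhds.congr' ?_
    have hev := hzw.eventually (Metric.ball_mem_nhds (0 : ℝ) (inv_pos.2 hk0))
    filter_upwards [hev] with n hn
    rw [Real.dist_0_eq_abs, abs_lt] at hn
    refine (max_eq_left ?_).symm
    rw [sub_nonpos]
    by_cases hwn : (k : ℝ) * w (c * √n) - 1 ≤ 0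
    · refine le_trans ?_ (h0 n)
      exact max_le le_rfl ((min_le_right _ _).trans hwn)
    · have : (k : ℝ)⁻¹ < w (c * √n) := by
        rw [inv_lt_iff_one_lt_mul₀ hk0]
        linarith
      rw [hpos n (by linarith [hn.1])]
      exact max_le zero_le_one (min_le_left _ _)
  have hlim := havg.sub herr.cesaro
  rw [sub_zero] at hlim
  filter_upwards [hlim.eventually (lt_mem_nhds hk)] with N hN
  refine hN.trans_le ?_
  rw [inv_mul_eq_div, ← sub_div, ← Finset.sum_sub_distrib]
  refine div_le_div_of_nonneg_right (Finset.sum_le_sum fun n _ => ?_) (Nat.cast_nonneg N)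
  simp only [Function.comp]
  linarith [le_max_right 0 (l k (w (c * √n)) - χ n)]

theorem tendsto_average_of_sign {w : ℝ → ℝ} (hw : Continuous w)
    (hper : Function.Periodic w 1) (hne : ∀ᵐ x, w x ≠ 0) {c : ℝ} (hc : 0 < c) {z χ : ℕ → ℝ}
    (hzw : Tendsto (fun n : ℕ => z n - w (c * √n)) atTop (nhds 0))
    (h0 : ∀ n, 0 ≤ χ n) (h1 : ∀ n, χ n ≤ 1) (hpos : ∀ n, 0 < z n → χ n = 1)
    (hneg : ∀ n, z n < 0 → χ n = 0) :
    Tendsto (fun N : ℕ => (∑ n ∈ Finset.range N, χ n) / N) atTop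
      (nhds (∫ x in (0 : ℝ)..1, if 0 < w x then (1 : ℝ) else 0)) := by
  have hmeas : ∀ {v : ℝ → ℝ}, Continuous v →
      IntervalIntegrable (fun x => if 0 < v x then (1 : ℝ) else 0) volume 0 1 := by
    intro v hv
    refine (intervalIntegrable_const (c := (1 : ℝ))).mono_fun ?_ (Eventually.of_forall fun x => ?_)
    · exact (Measurable.ite (measurableSet_lt measurable_const hv.measurable) measurable_const
        measurable_const).aestronglyMeasurable
    · dsimp only
      split_ifs <;> simp
  have hsum : (∫ x in (0 : ℝ)..1, if 0 < w x then (1 : ℝ) else 0)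
      + (∫ x in (0 : ℝ)..1, if 0 < -w x then (1 : ℝ) else 0) = 1 := by
    rw [← intervalIntegral.integral_add (hmeas hw) (hmeas hw.fun_neg)]
    refine (intervalIntegral.integral_congr_ae (g := fun _ => (1 : ℝ)) ?_).trans (by simp)
    filter_upwards [hne] with x hx _
    rcases lt_or_gt_of_ne hx with h | h
    · simp [h, h.le]
    · simp [h, h.le]
  refine tendsto_order.2 ⟨fun a ha => eventually_lt_average_of_sign hw hper hc hzw h0 hpos ha,
    fun b hb => ?_⟩
  have hneg' : Tendsto (fun n : ℕ => -z n - -w (c * √n)) atTop (nhds 0) := by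
    have := hzw.neg
    rw [neg_zero] at this
    exact this.congr fun n => by ring
  have := eventually_lt_average_of_sign (w := fun x => -w x) (χ := fun n => 1 - χ n) hw.neg
    (fun x => by simp [hper x]) hc hneg' (fun n => sub_nonneg.2 (h1 n))
    (fun n hn => by rw [hneg n (by linarith), sub_zero]) (a := 1 - b) (by linarith)
  filter_upwards [this, eventually_ge_atTop 1] with N hN hN1
  have hN0 : (0 : ℝ) < N := by exact_mod_cast hN1
  rw [Finset.sum_sub_distrib, Finset.sum_const, Finset.card_range, nsmul_eq_mul, mul_one, sub_div,
    div_self hN0.ne'] at hN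
  linarith

theorem sum_range_floor_add_div {p : ℕ} (hp : 0 < p) (x : ℝ) :
    ∑ j ∈ Finset.range p, ⌊x + j / p⌋ = ⌊p * x⌋ := by
  have hp0 : (p : ℝ) ≠ 0 := by positivity
  have hpz : (p : ℤ) ≠ 0 := by positivity
  have hdiv : ∀ n : ℤ, ∑ j ∈ Finset.range p, (n + j) / (p : ℤ) = n := by
    have hstep : ∀ n : ℤ, ∑ j ∈ Finset.range p, (n + 1 + j) / (p : ℤ)
        = ∑ j ∈ Finset.range p, (n + j) / (p : ℤ) + 1 := by
      intro n
      have h1 := Finset.sum_range_succ (fun j : ℕ => (n + j) / (p : ℤ)) p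
      have h2 := Finset.sum_range_succ' (fun j : ℕ => (n + j) / (p : ℤ)) p
      rw [h1, Nat.cast_zero, add_zero, Int.add_ediv_of_dvd_right (dvd_refl _),
        Int.ediv_self hpz] at h2
      have e : ∀ j : ℕ, n + ((j + 1 : ℕ) : ℤ) = n + 1 + j := fun j => by push_cast; ring
      simp only [e] at h2
      linarith
    intro n
    induction n using Int.induction_on with
    | zero =>
      refine Finset.sum_eq_zero fun j hj => ?_
      rw [zero_add]
      exact Int.ediv_eq_zero_of_lt (by positivity) (by exact_mod_cast Finset.mem_range.1 hj)
    | succ n ih => rw [hstep, ih]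
    | pred n ih =>
      have := hstep (-(n : ℤ) - 1)
      rw [sub_add_cancel, ih] at this
      linarith
  rw [← hdiv ⌊p * x⌋]
  refine Finset.sum_congr rfl fun j _ => ?_
  rw [← Int.floor_add_natCast, ← Int.floor_div_natCast]
  congr 1
  field_simp

/-- The square wave of period one, equal to the sign of `sin (2πx)` away from its zeros. -/
noncomputable def sqWave (x : ℝ) : ℝ := 1 + 2 * ⌊x⌋ - 2 * ⌊x + 1 / 2⌋

theorem sqWave_periodic : Function.Periodic sqWave 1 := by
  intro x
  rw [sqWave, sqWave, add_right_comm, Int.floor_add_one, Int.floor_add_one]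
  push_cast
  ring

theorem sqWave_add_half (x : ℝ) : sqWave (x + 1 / 2) = -sqWave x := by
  rw [sqWave, sqWave, add_assoc, add_halves, Int.floor_add_one]
  push_cast
  ring

theorem sqWave_add_int_div_two (x : ℝ) (k : ℤ) : sqWave (x + k / 2) = (-1) ^ k * sqWave x := by
  induction k using Int.induction_on with
  | zero => simp
  | succ n ih =>
    rw [zpow_add_one₀ (by norm_num), mul_neg_one, neg_mul, ← ih, ← sqWave_add_half]
    push_cast
    ring_nf
  | pred n ih =>
    rw [zpow_sub_one₀ (by norm_num), inv_neg_one, mul_neg_one, neg_mul, ← ih,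
      eq_neg_iff_add_eq_zero, add_comm, ← eq_neg_iff_add_eq_zero, ← sqWave_add_half]
    push_cast
    ring_nf

theorem sqWave_fract (x : ℝ) : sqWave (Int.fract x) = sqWave x := by
  have := sqWave_periodic.sub_int_mul_eq (x := x) ⌊x⌋
  rwa [mul_one] at this

theorem sqWave_eq_ite (x : ℝ) : sqWave x = if Int.fract x < 1 / 2 then 1 else -1 := by
  rw [← sqWave_fract, sqWave, Int.floor_fract]
  have h0 := Int.fract_nonneg x
  have h1 := Int.fract_lt_one x
  split_ifs with h
  · rw [Int.floor_eq_zero_iff.2 ⟨by linarith, by linarith⟩]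
    simp
  · have : ⌊Int.fract x + 1 / 2⌋ = 1 :=
      Int.floor_eq_iff.2 ⟨by push_cast; linarith, by push_cast; linarith⟩
    rw [this]
    norm_num

theorem sqWave_mul_self (x : ℝ) : sqWave x * sqWave x = 1 := by
  rw [sqWave_eq_ite]
  split_ifs <;> norm_num

theorem abs_sqWave (x : ℝ) : |sqWave x| = 1 := by
  rw [sqWave_eq_ite]
  split_ifs <;> norm_num

theorem measurable_sqWave : Measurable sqWave := by
  unfold sqWave
  have h : Measurable fun x : ℝ => ((⌊x⌋ : ℤ) : ℝ) := by fun_prop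
  exact (measurable_const.add (h.const_mul 2)).sub
    ((h.comp (measurable_id.add_const (1 / 2))).const_mul 2)

theorem sin_two_pi_mul_fract (x : ℝ) : sin (2 * π * Int.fract x) = sin (2 * π * x) := by
  rw [Int.fract, mul_sub, mul_comm _ (⌊x⌋ : ℝ), sin_sub_int_mul_two_pi]

theorem sqWave_of_sin_pos {x : ℝ} (h : 0 < sin (2 * π * x)) : sqWave x = 1 := by
  rw [sqWave_eq_ite, if_pos]
  by_contra! hx
  rw [← sin_two_pi_mul_fract] at h
  have h1 := Int.fract_lt_one x
  have : 0 ≤ sin (2 * π * Int.fract x - π) :=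
    sin_nonneg_of_nonneg_of_le_pi (by nlinarith [pi_pos]) (by nlinarith [pi_pos])
  rw [sin_sub_pi] at this
  linarith

theorem sqWave_of_sin_neg {x : ℝ} (h : sin (2 * π * x) < 0) : sqWave x = -1 := by
  rw [sqWave_eq_ite, if_neg]
  intro hx
  rw [← sin_two_pi_mul_fract] at h
  have h1 := Int.fract_nonneg x
  have : 0 ≤ sin (2 * π * Int.fract x) :=
    sin_nonneg_of_nonneg_of_le_pi (by positivity) (by nlinarith [pi_pos])
  linarith

theorem sum_range_sqWave_add_div_of_odd {p : ℕ} (hp : Odd p) (x : ℝ) :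
    ∑ j ∈ Finset.range p, sqWave (x + j / p) = sqWave (p * x) := by
  have hp0 := hp.pos
  have h1 := sum_range_floor_add_div hp0 x
  have h2 := sum_range_floor_add_div hp0 (x + 1 / 2)
  obtain ⟨m, hm⟩ := hp
  have e : (p : ℝ) * (x + 1 / 2) = p * x + 1 / 2 + m := by
    rw [hm]
    push_cast
    ring
  rw [e, Int.floor_add_natCast] at h2
  simp only [sqWave]
  rw [Finset.sum_sub_distrib, Finset.sum_add_distrib, Finset.sum_const, Finset.card_range,
    ← Finset.mul_sum, ← Finset.mul_sum, ← Int.cast_sum, h1]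
  simp only [add_right_comm x _ (1 / 2 : ℝ)]
  rw [← Int.cast_sum, h2, hm]
  push_cast
  simp
  ring

theorem sum_range_sqWave_add_div_of_even {p : ℕ} (hp0 : 0 < p) (hp : Even p) (x : ℝ) :
    ∑ j ∈ Finset.range p, sqWave (x + j / p) = 0 := by
  have h1 := sum_range_floor_add_div hp0 x
  have h2 := sum_range_floor_add_div hp0 (x + 1 / 2)
  obtain ⟨m, hm⟩ := hp
  have e : (p : ℝ) * (x + 1 / 2) = p * x + m := by
    rw [hm]
    push_cast
    ring
  rw [e, Int.floor_add_natCast] at h2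
  simp only [sqWave]
  rw [Finset.sum_sub_distrib, Finset.sum_add_distrib, Finset.sum_const, Finset.card_range,
    ← Finset.mul_sum, ← Finset.mul_sum, ← Int.cast_sum, h1]
  simp only [add_right_comm x _ (1 / 2 : ℝ)]
  rw [← Int.cast_sum, h2, hm]
  push_cast
  simp
  ring

theorem sum_range_comp_mul_of_coprime {p q : ℕ} (hp : 0 < p) (hpq : p.Coprime q) {g : ℕ → ℝ}
    (hg : Function.Periodic g p) :
    ∑ j ∈ Finset.range p, g (q * j) = ∑ j ∈ Finset.range p, g j := by
  have hmaps : ∀ j ∈ Finset.range p, q * j % p ∈ Finset.range p := fun j _ =>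
    Finset.mem_range.2 (Nat.mod_lt _ hp)
  have hinj : Set.InjOn (fun j => q * j % p) (Finset.range p : Set ℕ) := by
    intro i hi j hj hij
    have : q * i ≡ q * j [MOD p] := hij
    exact (Nat.ModEq.cancel_left_of_coprime hpq this).eq_of_lt_of_lt
      (by simpa using hi) (by simpa using hj)
  refine Finset.sum_nbij (fun j => q * j % p) hmaps hinj
    (Finset.surjOn_of_injOn_of_card_le _ hmaps hinj le_rfl) fun j _ => ?_
  exact (hg.map_mod_nat _).symm

theorem intervalIntegrable_sqWave_mul_sqWave {f g : ℝ → ℝ} (hf : Measurable f) (hg : Measurable g)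
    (a b : ℝ) : IntervalIntegrable (fun x => sqWave (f x) * sqWave (g x)) volume a b := by
  refine (intervalIntegrable_const (c := (1 : ℝ))).mono_fun
    ((measurable_sqWave.comp hf).mul (measurable_sqWave.comp hg)).aestronglyMeasurable
    (Eventually.of_forall fun x => ?_)
  simp [abs_sqWave]

theorem integral_comp_add_of_periodic_one {f : ℝ → ℝ} (hf : Function.Periodic f 1) (t : ℝ) :
    ∫ x in (0 : ℝ)..1, f (x + t) = ∫ x in (0 : ℝ)..1, f x := by
  rw [intervalIntegral.integral_comp_add_right, zero_add, add_comm 1 t,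
    hf.intervalIntegral_add_eq t 0, zero_add]

theorem integral_comp_mul_of_periodic_one {f : ℝ → ℝ} (hf : Function.Periodic f 1)
    (hint : ∀ a b, IntervalIntegrable f volume a b) {m : ℕ} (hm : 0 < m) :
    ∫ x in (0 : ℝ)..1, f (m * x) = ∫ x in (0 : ℝ)..1, f x := by
  have hm0 : (m : ℝ) ≠ 0 := by positivity
  have := hf.intervalIntegral_add_zsmul_eq m 0 hint
  rw [zero_add, zero_add] at this
  rw [intervalIntegral.integral_comp_mul_left _ hm0, mul_zero, mul_one]
  simp only [zsmul_eq_mul, Int.cast_natCast, mul_one] at this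
  rw [this, smul_eq_mul, inv_mul_cancel_left₀ hm0]

theorem mul_integral_eq_integral_sum_of_periodic_one {f : ℝ → ℝ} (hf : Function.Periodic f 1)
    (hint : ∀ t, IntervalIntegrable (fun x => f (x + t)) volume 0 1) (p : ℕ) :
    p * ∫ x in (0 : ℝ)..1, f x = ∫ x in (0 : ℝ)..1, ∑ j ∈ Finset.range p, f (x + j / p) := by
  rw [intervalIntegral.integral_finsetSum fun j _ => hint _]
  simp [integral_comp_add_of_periodic_one hf]

theorem sqWave_add_nat (x : ℝ) (n : ℕ) : sqWave (x + n) = sqWave x := by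
  simpa using sqWave_periodic.nat_mul n x

theorem mul_integral_sqWave_mul_sqWave {p q : ℕ} (hp : 0 < p) (hpq : p.Coprime q) (k : ℕ)
    (a b : ℝ) :
    p * ∫ x in (0 : ℝ)..1, sqWave (k * (p * x) + a) * sqWave (q * x + b)
      = ∫ x in (0 : ℝ)..1, sqWave (k * (p * x) + a) *
        ∑ j ∈ Finset.range p, sqWave (q * x + b + j / p) := by
  have hp0 : (p : ℝ) ≠ 0 := by positivity
  have hper : Function.Periodic (fun x => sqWave (k * (p * x) + a) * sqWave (q * x + b)) 1 := by
    intro x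
    have e1 : (k : ℝ) * (p * (x + 1)) + a = k * (p * x) + a + (k * p : ℕ) := by push_cast; ring
    have e2 : (q : ℝ) * (x + 1) + b = q * x + b + q := by ring
    simp only [e1, e2, sqWave_add_nat]
  rw [mul_integral_eq_integral_sum_of_periodic_one hper fun t =>
    intervalIntegrable_sqWave_mul_sqWave (by fun_prop) (by fun_prop) _ _]
  refine intervalIntegral.integral_congr fun x _ => ?_
  have hg : Function.Periodic (fun j : ℕ => sqWave (q * x + b + j / p)) p := by
    intro j
    have e : (q : ℝ) * x + b + ((j + p : ℕ) : ℝ) / p = q * x + b + j / p + (1 : ℕ) := by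
      push_cast
      field_simp
      ring
    simp only [e, sqWave_add_nat]
  rw [← sum_range_comp_mul_of_coprime hp hpq hg, Finset.mul_sum]
  refine Finset.sum_congr rfl fun j _ => ?_
  have e1 : (k : ℝ) * (p * (x + j / p)) + a = k * (p * x) + a + (k * j : ℕ) := by
    push_cast
    field_simp
    ring
  have e2 : (q : ℝ) * (x + j / p) + b = q * x + b + ((q * j : ℕ) : ℝ) / p := by
    push_cast
    ring
  rw [e1, e2, sqWave_add_nat]

theorem integral_sqWave_mul_sqWave_of_even {p q : ℕ} (hp : 0 < p) (hpq : p.Coprime q)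
    (hev : Even p) (a b : ℝ) :
    ∫ x in (0 : ℝ)..1, sqWave (p * x + a) * sqWave (q * x + b) = 0 := by
  have hp0 : (p : ℝ) ≠ 0 := by positivity
  have := mul_integral_sqWave_mul_sqWave hp hpq 1 a b
  simp only [sum_range_sqWave_add_div_of_even hp hev, mul_zero, Nat.cast_one, one_mul,
    intervalIntegral.integral_zero] at this
  exact (mul_eq_zero.1 this).resolve_left hp0

theorem integral_sqWave_mul_sqWave_of_odd {p q : ℕ} (hp : Odd p) (hq : Odd q)
    (hpq : p.Coprime q) (a : ℝ) :
    p * q * ∫ x in (0 : ℝ)..1, sqWave (p * x + a) * sqWave (q * x + a)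
      = ∫ x in (0 : ℝ)..1, sqWave (x + (q - p) * a) * sqWave x := by
  have h1 := mul_integral_sqWave_mul_sqWave hp.pos hpq 1 a a
  have h2 := mul_integral_sqWave_mul_sqWave hq.pos hpq.symm p (p * a) a
  simp only [sum_range_sqWave_add_div_of_odd hp, Nat.cast_one, one_mul] at h1
  simp only [sum_range_sqWave_add_div_of_odd hq] at h2
  have e1 : ∫ x in (0 : ℝ)..1, sqWave (p * x + a) * sqWave (p * (q * x + a))
      = ∫ x in (0 : ℝ)..1, sqWave (p * (q * x) + p * a) * sqWave (p * x + a) := by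
    refine intervalIntegral.integral_congr fun x _ => ?_
    rw [mul_comm, mul_add]
  set h : ℝ → ℝ := fun v => sqWave (v + (q - p) * a) * sqWave v with hh
  have hper : Function.Periodic h 1 := by
    intro v
    simp only [hh]
    rw [add_right_comm, sqWave_periodic, sqWave_periodic]
  have hint : ∀ a b, IntervalIntegrable h volume a b := fun _ _ =>
    intervalIntegrable_sqWave_mul_sqWave (by fun_prop) (by fun_prop) _ _
  have e2 : ∫ x in (0 : ℝ)..1, sqWave (p * (q * x) + p * a) * sqWave (q * (p * x + a))
      = ∫ x in (0 : ℝ)..1, h (((p * q : ℕ) : ℝ) * x + p * a) := by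
    refine intervalIntegral.integral_congr fun x _ => ?_
    simp only [hh]
    rw [mul_comm]
    congr 2
    · push_cast
      ring
    · push_cast
      ring
  have hper' : Function.Periodic (fun v => h (v + p * a)) 1 := by
    intro v
    simp only
    rw [add_right_comm, hper]
  have e3 := integral_comp_mul_of_periodic_one hper' (fun _ _ =>
    intervalIntegrable_sqWave_mul_sqWave (by fun_prop) (by fun_prop) _ _)
    (Nat.mul_pos hp.pos hq.pos)
  rw [mul_comm (p : ℝ), mul_assoc, h1, e1, h2, e2, e3, integral_comp_add_of_periodic_one hper]

theorem integral_sqWave_add_int_div_two (k : ℤ) :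
    ∫ x in (0 : ℝ)..1, sqWave (x + k / 2) * sqWave x = (-1) ^ k := by
  simp only [sqWave_add_int_div_two, mul_assoc, sqWave_mul_self]
  simp

theorem integral_sqWave_add_quarter_add_int_div_two (k : ℤ) :
    ∫ x in (0 : ℝ)..1, sqWave (x + (1 / 4 + k / 2)) * sqWave x = 0 := by
  simp only [← add_assoc, sqWave_add_int_div_two, mul_assoc, intervalIntegral.integral_const_mul]
  refine mul_eq_zero_of_right _ ?_
  have hper : Function.Periodic (fun x => sqWave (x + 1 / 4) * sqWave x) 1 := by
    intro x
    simp only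
    rw [add_right_comm, sqWave_periodic, sqWave_periodic]
  have h := integral_comp_add_of_periodic_one hper (1 / 4)
  have e : ∀ x : ℝ, sqWave (x + 1 / 4 + 1 / 4) * sqWave (x + 1 / 4)
      = -(sqWave (x + 1 / 4) * sqWave x) := by
    intro x
    rw [add_assoc, show (1 / 4 + 1 / 4 : ℝ) = 1 / 2 by norm_num, sqWave_add_half]
    ring
  simp only [e, intervalIntegral.integral_neg] at h
  linarith

theorem ae_sin_two_pi_mul_ne_zero {p : ℝ} (hp : 0 < p) (a : ℝ) :
    ∀ᵐ x : ℝ, sin (2 * π * (p * x + a)) ≠ 0 := by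
  have hc : (Set.range fun n : ℤ => ((n : ℝ) / 2 - a) / p).Countable := Set.countable_range _
  filter_upwards [hc.ae_notMem volume] with x hx h
  obtain ⟨n, hn⟩ := sin_eq_zero_iff.1 h
  refine hx ⟨n, ?_⟩
  have h2 : (n : ℝ) = 2 * (p * x + a) := by
    have := pi_pos.ne'
    field_simp at hn
    linarith
  simp only
  rw [h2]
  field_simp
  ring

theorem cos_sub_eq_sin_two_pi_mul (y : ℝ) (D : ℕ) :
    cos (2 * π * y - D * π / 4) = sin (2 * π * (y + (1 / 4 - D / 8))) := by
  rw [← cos_pi_div_two_sub, ← cos_neg]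
  congr 1
  ring

theorem integral_cos_mul_cos_pos {p q : ℕ} (hp : 0 < p) (hq : 0 < q) (D : ℕ) :
    (∫ x in (0 : ℝ)..1, if 0 < cos (2 * π * (p * x) - D * π / 4) *
        cos (2 * π * (q * x) - D * π / 4) then (1 : ℝ) else 0)
      = (1 + ∫ x in (0 : ℝ)..1, sqWave (p * x + (1 / 4 - D / 8)) *
        sqWave (q * x + (1 / 4 - D / 8))) / 2 := by
  have hint := intervalIntegrable_sqWave_mul_sqWave (f := fun x => p * x + (1 / 4 - D / 8))
    (g := fun x => q * x + (1 / 4 - D / 8)) (by fun_prop) (by fun_prop) 0 1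
  have h1 : (1 : ℝ) = ∫ x in (0 : ℝ)..1, (1 : ℝ) := by simp
  have h2 := intervalIntegral.integral_add (intervalIntegrable_const (c := (1 : ℝ))) hint
  rw [← h1] at h2
  rw [← h2, ← intervalIntegral.integral_div]
  refine intervalIntegral.integral_congr_ae ?_
  filter_upwards [ae_sin_two_pi_mul_ne_zero (p := p) (by exact_mod_cast hp) (1 / 4 - D / 8),
    ae_sin_two_pi_mul_ne_zero (p := q) (by exact_mod_cast hq) (1 / 4 - D / 8)] with x hx hy _
  rw [cos_sub_eq_sin_two_pi_mul, cos_sub_eq_sin_two_pi_mul]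
  rcases lt_or_gt_of_ne hx with h | h <;> rcases lt_or_gt_of_ne hy with h' | h'
  · rw [if_pos (mul_pos_of_neg_of_neg h h'), sqWave_of_sin_neg h, sqWave_of_sin_neg h']
    norm_num
  · rw [if_neg (mul_neg_of_neg_of_pos h h').not_gt, sqWave_of_sin_neg h, sqWave_of_sin_pos h']
    norm_num
  · rw [if_neg (mul_neg_of_pos_of_neg h h').not_gt, sqWave_of_sin_pos h, sqWave_of_sin_neg h']
    norm_num
  · rw [if_pos (mul_pos h h'), sqWave_of_sin_pos h, sqWave_of_sin_pos h']
    norm_num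

theorem integral_sqWave_eq_ite {p q : ℕ} (hp : 0 < p) (hq : 0 < q) (hpq : p.Coprime q) (D : ℕ) :
    (1 + ∫ x in (0 : ℝ)..1, sqWave (p * x + (1 / 4 - D / 8)) *
        sqWave (q * x + (1 / 4 - D / 8))) / 2
      = if (Even (p : ℤ) ∨ Even (q : ℤ)) ∨
          (Odd (p : ℤ) ∧ Odd (q : ℤ) ∧ Odd (((p : ℤ) - q) * (D : ℤ) / 2))
        then 1 / 2
        else 1 / 2 - (1 / (2 * (p : ℝ) * (q : ℝ))) *
          (-1 : ℝ) ^ (((p : ℤ) + q) / 2 + ((p : ℤ) - q) * (D : ℤ) / 4) := by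
  have hp0 : (p : ℝ) ≠ 0 := by positivity
  have hq0 : (q : ℝ) ≠ 0 := by positivity
  by_cases hpe : Even p
  · rw [if_pos (Or.inl (Or.inl (by exact_mod_cast hpe))),
      integral_sqWave_mul_sqWave_of_even hp hpq hpe, add_zero]
  by_cases hqe : Even q
  · have := integral_sqWave_mul_sqWave_of_even hq hpq.symm hqe (1 / 4 - (D : ℝ) / 8)
      (1 / 4 - (D : ℝ) / 8)
    simp only [mul_comm (sqWave (q * _ + _))] at this
    rw [if_pos (Or.inl (Or.inr (by exact_mod_cast hqe))), this, add_zero]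
  have hpo : Odd p := Nat.not_even_iff_odd.1 hpe
  have hqo : Odd q := Nat.not_even_iff_odd.1 hqe
  have hpo' : Odd (p : ℤ) := by exact_mod_cast hpo
  have hqo' : Odd (q : ℤ) := by exact_mod_cast hqo
  have key := integral_sqWave_mul_sqWave_of_odd hpo hqo hpq (1 / 4 - (D : ℝ) / 8)
  obtain ⟨e, he⟩ := hpo'.sub_odd hqo'
  have he' : (p : ℝ) - q = e + e := by exact_mod_cast he
  have hhalf : ((p : ℤ) - q) * (D : ℤ) / 2 = e * D := by
    rw [he, ← two_mul, mul_assoc, Int.mul_ediv_cancel_left _ two_ne_zero]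
  rcases Int.even_or_odd (e * D) with ⟨h, hh⟩ | ⟨h, hh⟩
  · have hh' : (e : ℝ) * D = h + h := by exact_mod_cast hh
    have hβ : ((q : ℝ) - p) * (1 / 4 - (D : ℝ) / 8) = ((h - e : ℤ) : ℝ) / 2 := by
      push_cast
      linear_combination (-(1 / 4 : ℝ) + D / 8) * he' + hh' / 4
    rw [hβ, integral_sqWave_add_int_div_two] at key
    rw [if_neg]
    · have hquart : ((p : ℤ) - q) * (D : ℤ) / 4 = h := by
        rw [he, ← two_mul, mul_assoc, hh, ← two_mul, ← mul_assoc]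
        exact Int.mul_ediv_cancel_left _ (by norm_num)
      have hsum : ((p : ℤ) + q) / 2 = q + e := by
        rw [show (p : ℤ) + q = 2 * (q + e) by linarith]
        exact Int.mul_ediv_cancel_left _ two_ne_zero
      have hpow : (-1 : ℝ) ^ ((q : ℤ) + e + h) = -(-1) ^ (h - e) := by
        rw [show (q : ℤ) + e + h = q + (h - e + (e + e)) by ring, zpow_add₀ (by norm_num),
          zpow_add₀ (by norm_num), hqo'.neg_one_zpow, (Even.add_self e).neg_one_zpow]
        ring
      rw [hquart, hsum, hpow, ← key]
      generalize (∫ x in (0 : ℝ)..1, sqWave (p * x + (1 / 4 - D / 8)) *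
        sqWave (q * x + (1 / 4 - D / 8))) = J
      field_simp
      ring
    · rw [hhalf]
      rintro ((h1 | h1) | ⟨-, -, h1⟩)
      · exact Int.not_even_iff_odd.2 hpo' h1
      · exact Int.not_even_iff_odd.2 hqo' h1
      · exact Int.not_even_iff_odd.2 h1 ⟨h, hh⟩
  · have hh' : (e : ℝ) * D = 2 * h + 1 := by exact_mod_cast hh
    have hβ : ((q : ℝ) - p) * (1 / 4 - (D : ℝ) / 8) = 1 / 4 + ((h - e : ℤ) : ℝ) / 2 := by
      push_cast
      linear_combination (-(1 / 4 : ℝ) + D / 8) * he' + hh' / 4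
    rw [hβ, integral_sqWave_add_quarter_add_int_div_two] at key
    rw [if_pos (Or.inr ⟨hpo', hqo', by rw [hhalf]; exact ⟨h, hh⟩⟩),
      (mul_eq_zero.1 key).resolve_left (mul_ne_zero hp0 hq0), add_zero]

theorem tendsto_mul_sub_cos_mul_cos {u v φ ψ : ℕ → ℝ}
    (hu : Tendsto (fun n => u n - cos (φ n)) atTop (nhds 0))
    (hv : Tendsto (fun n => v n - cos (ψ n)) atTop (nhds 0)) :
    Tendsto (fun n => u n * v n - cos (φ n) * cos (ψ n)) atTop (nhds 0) := by
  have hbdd : ∀ (ε φ : ℕ → ℝ), Tendsto ε atTop (nhds 0) →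
      Tendsto (fun n => cos (φ n) * ε n) atTop (nhds 0) := by
    intro ε φ hε
    refine squeeze_zero_norm (fun n => ?_) (by simpa using hε.abs)
    rw [norm_mul]
    exact mul_le_of_le_one_left (norm_nonneg _) (Real.abs_cos_le_one _)
  have := ((hu.mul hv).add (hbdd _ φ hv)).add (hbdd _ ψ hu)
  simp only [mul_zero, add_zero] at this
  exact this.congr fun n => by ring

theorem sgn_eq_of_mul_pos {a b : ℝ} (h : 0 < a * b) : sgn a = sgn b := by
  rcases pos_and_pos_or_neg_and_neg_of_mul_pos h with ⟨ha, hb⟩ | ⟨ha, hb⟩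
  · simp [sgn, ha, hb]
  · simp [sgn, ha, hb, ha.not_gt, hb.not_gt]

theorem sgn_ne_of_mul_neg {a b : ℝ} (h : a * b < 0) : sgn a ≠ sgn b := by
  rcases mul_neg_iff.1 h with ⟨ha, hb⟩ | ⟨ha, hb⟩
  · simp [sgn, ha, hb, hb.not_gt]
    norm_num
  · simp [sgn, ha, hb, ha.not_gt]
    norm_num

theorem exists_pos_tendsto_lagFun_sub_cos (D : ℕ) {r : ℝ} (hr : 0 < r) :
    ∃ c : ℕ → ℝ, (∀ n, 0 < c n) ∧ Tendsto (fun n : ℕ => c n * LagFun (D + 1) n r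
      - cos (2 * √n * (√(2 * π) * r) - D * π / 4)) atTop (nhds 0) := by
  have hs : 0 < √(2 * π) := by positivity
  obtain ⟨c, hc, h⟩ := exists_pos_tendsto_lag_sub_cos D (mul_pos hs hr)
  refine ⟨fun n => c n * exp (π * r ^ 2), fun n => mul_pos (hc n) (exp_pos _),
    h.congr fun n => ?_⟩
  have e : exp (π * r ^ 2) * exp (-π * r ^ 2) = 1 := by
    rw [← exp_add, ← exp_zero]
    ring_nf
  rw [mul_pow, Real.sq_sqrt (by positivity), LagFun]
  linear_combination -c n * Lag (((D + 1 : ℕ) : ℝ) / 2 - 1) n (2 * π * r ^ 2) * e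

theorem laguerre_sign_correlation
    (d : ℕ) (hd : 1 ≤ d)
    (r₁ r₂ : ℝ) (hr₁ : 0 < r₁) (hr₂ : 0 < r₂)
    (p q : ℤ) (hp : 0 < p) (hq : 0 < q) (hcop : IsCoprime p q)
    (hpq : (q : ℝ) * r₁ = (p : ℝ) * r₂) :
    Tendsto (fun N : ℕ =>
      (((Finset.range N).filter (fun n =>
        sgn (LagFun d n r₁) = sgn (LagFun d n r₂))).card : ℝ) / N)
      atTop (nhds
        (if (Even p ∨ Even q) ∨ (Odd p ∧ Odd q ∧ Odd ((p - q) * ((d : ℤ) - 1) / 2))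
         then 1/2
         else 1/2 - (1 / (2 * (p : ℝ) * (q : ℝ))) *
           (-1 : ℝ) ^ ((p + q) / 2 + (p - q) * ((d : ℤ) - 1) / 4))) := by
  lift p to ℕ using hp.le
  lift q to ℕ using hq.le
  have hp' : 0 < p := by exact_mod_cast hp
  have hq' : 0 < q := by exact_mod_cast hq
  have hpR : (0 : ℝ) < p := by exact_mod_cast hp'
  have hcop' : p.Coprime q := Nat.isCoprime_iff_coprime.1 hcop
  obtain ⟨D, rfl⟩ := Nat.exists_eq_add_of_le' hd
  obtain ⟨c₁, hc₁, h₁⟩ := exists_pos_tendsto_lagFun_sub_cos D hr₁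
  obtain ⟨c₂, hc₂, h₂⟩ := exists_pos_tendsto_lagFun_sub_cos D hr₂
  simp only [Int.cast_natCast] at hpq ⊢
  set c := √(2 * π) * r₁ / p / π with hcdef
  have hc : 0 < c := by positivity
  have hprod := tendsto_mul_sub_cos_mul_cos h₁ h₂
  have e₁ : ∀ n : ℕ, 2 * √(n : ℝ) * (√(2 * π) * r₁) = 2 * π * (p * (c * √n)) := by
    intro n
    rw [hcdef]
    field_simp
  have e₂ : ∀ n : ℕ, 2 * √(n : ℝ) * (√(2 * π) * r₂) = 2 * π * (q * (c * √n)) := by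
    intro n
    rw [hcdef]
    field_simp
    linear_combination -√(n : ℝ) * hpq
  simp only [e₁, e₂] at hprod
  have hlim := tendsto_average_of_sign
    (w := fun x => cos (2 * π * (p * x) - D * π / 4) * cos (2 * π * (q * x) - D * π / 4))
    (χ := fun n => if sgn (LagFun (D + 1) n r₁) = sgn (LagFun (D + 1) n r₂) then 1 else 0)
    (by fun_prop)
    (fun x => by
      have e : ∀ m : ℕ, cos (2 * π * (m * (x + 1)) - D * π / 4)
          = cos (2 * π * (m * x) - D * π / 4) := fun m => by
        rw [← cos_add_nat_mul_two_pi (2 * π * (m * x) - D * π / 4) m]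
        ring_nf
      simp only [e])
    (by
      filter_upwards [ae_sin_two_pi_mul_ne_zero (p := p) hpR (1 / 4 - D / 8),
        ae_sin_two_pi_mul_ne_zero (p := q) (by exact_mod_cast hq') (1 / 4 - D / 8)] with x hx hy
      rw [cos_sub_eq_sin_two_pi_mul, cos_sub_eq_sin_two_pi_mul]
      exact mul_ne_zero hx hy)
    hc hprod (fun n => by split_ifs <;> norm_num)
    (fun n => by split_ifs <;> norm_num)
    (fun n hn => if_pos (sgn_eq_of_mul_pos (by
      rw [mul_mul_mul_comm] at hn
      exact (mul_pos_iff_of_pos_left (mul_pos (hc₁ n) (hc₂ n))).1 hn)))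
    (fun n hn => if_neg (sgn_ne_of_mul_neg (by
      rw [mul_mul_mul_comm] at hn
      exact neg_of_mul_neg_right hn (mul_pos (hc₁ n) (hc₂ n)).le)))
  rw [integral_cos_mul_cos_pos hp' hq', integral_sqWave_eq_ite hp' hq' hcop'] at hlim
  simp only [Finset.natCast_card_filter, Nat.cast_add, Nat.cast_one, add_sub_cancel_right]
  exact hlim
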